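/- arXiv:2505.12866 — 4 statements merged into one kernel-verified Lean document; each statement's English description precedes it below -/
import Mathlib

section
/- Let H be a long prism, a pyramid, a theta, or a broken wheel. Then H contains either P_4 + P_1 or C_4 as an induced subgraph. -/
open SimpleGraph

/-- `u` and `v` are consecutive (in some order) in the list `P`. -/
def ConsecIn {V : Type*} (P : List V) (u v : V) : Prop :=
  ∃ l₁ l₂ : List V, P = l₁ ++ u :: v :: l₂ ∨ P = l₁ ++ v :: u :: l₂

/-- `H` is a prism: it is made of three vertex-disjoint chordless paths `P₁ = a₁…b₁`,
`P₂ = a₂…b₂`, `P₃ = a₃…b₃`, each of length at least 1, such that `{a₁,a₂,a₃}` and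
`{b₁,b₂,b₃}` are triangles and the only edges of `H` are the path edges and the edges of
the two triangles. (Paths are encoded as nodup lists of vertices; the adjacency
characterization forces consecutive list entries to be adjacent and the paths to be
chordless.) -/
def IsPrism {V : Type*} (H : SimpleGraph V) : Prop :=
  ∃ (P₁ P₂ P₃ : List V) (a₁ b₁ a₂ b₂ a₃ b₃ : V),
    P₁.Nodup ∧ P₂.Nodup ∧ P₃.Nodup ∧
    2 ≤ P₁.length ∧ 2 ≤ P₂.length ∧ 2 ≤ P₃.length ∧
    P₁.head? = some a₁ ∧ P₁.getLast? = some b₁ ∧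
    P₂.head? = some a₂ ∧ P₂.getLast? = some b₂ ∧
    P₃.head? = some a₃ ∧ P₃.getLast? = some b₃ ∧
    P₁.Disjoint P₂ ∧ P₁.Disjoint P₃ ∧ P₂.Disjoint P₃ ∧
    (∀ v : V, v ∈ P₁ ∨ v ∈ P₂ ∨ v ∈ P₃) ∧
    (∀ u v : V, H.Adj u v ↔
      ConsecIn P₁ u v ∨ ConsecIn P₂ u v ∨ ConsecIn P₃ u v ∨
      (u ≠ v ∧ u ∈ ({a₁, a₂, a₃} : Set V) ∧ v ∈ ({a₁, a₂, a₃} : Set V)) ∨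
      (u ≠ v ∧ u ∈ ({b₁, b₂, b₃} : Set V) ∧ v ∈ ({b₁, b₂, b₃} : Set V)))

/-- `H` is a long prism: a prism at least one of whose three paths has length at least 2
(i.e. at least 3 vertices). -/
def IsLongPrism {V : Type*} (H : SimpleGraph V) : Prop :=
  ∃ (P₁ P₂ P₃ : List V) (a₁ b₁ a₂ b₂ a₃ b₃ : V),
    P₁.Nodup ∧ P₂.Nodup ∧ P₃.Nodup ∧
    2 ≤ P₁.length ∧ 2 ≤ P₂.length ∧ 2 ≤ P₃.length ∧
    (3 ≤ P₁.length ∨ 3 ≤ P₂.length ∨ 3 ≤ P₃.length) ∧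
    P₁.head? = some a₁ ∧ P₁.getLast? = some b₁ ∧
    P₂.head? = some a₂ ∧ P₂.getLast? = some b₂ ∧
    P₃.head? = some a₃ ∧ P₃.getLast? = some b₃ ∧
    P₁.Disjoint P₂ ∧ P₁.Disjoint P₃ ∧ P₂.Disjoint P₃ ∧
    (∀ v : V, v ∈ P₁ ∨ v ∈ P₂ ∨ v ∈ P₃) ∧
    (∀ u v : V, H.Adj u v ↔
      ConsecIn P₁ u v ∨ ConsecIn P₂ u v ∨ ConsecIn P₃ u v ∨
      (u ≠ v ∧ u ∈ ({a₁, a₂, a₃} : Set V) ∧ v ∈ ({a₁, a₂, a₃} : Set V)) ∨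
      (u ≠ v ∧ u ∈ ({b₁, b₂, b₃} : Set V) ∧ v ∈ ({b₁, b₂, b₃} : Set V)))

/-- `H` is a pyramid: three chordless paths `Pᵢ = a…bᵢ` of length at least 1, at least two
of which have length at least 2, pairwise vertex-disjoint except at the common extremity
`a`, such that `{b₁,b₂,b₃}` is a triangle and the only edges of `H` are the path edges and
the triangle edges. -/
def IsPyramid {V : Type*} (H : SimpleGraph V) : Prop :=
  ∃ (P₁ P₂ P₃ : List V) (a b₁ b₂ b₃ : V),
    P₁.Nodup ∧ P₂.Nodup ∧ P₃.Nodup ∧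
    2 ≤ P₁.length ∧ 2 ≤ P₂.length ∧ 2 ≤ P₃.length ∧
    ((3 ≤ P₁.length ∧ 3 ≤ P₂.length) ∨ (3 ≤ P₁.length ∧ 3 ≤ P₃.length) ∨
      (3 ≤ P₂.length ∧ 3 ≤ P₃.length)) ∧
    P₁.head? = some a ∧ P₂.head? = some a ∧ P₃.head? = some a ∧
    P₁.getLast? = some b₁ ∧ P₂.getLast? = some b₂ ∧ P₃.getLast? = some b₃ ∧
    P₁.tail.Disjoint P₂.tail ∧ P₁.tail.Disjoint P₃.tail ∧ P₂.tail.Disjoint P₃.tail ∧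
    (∀ v : V, v ∈ P₁ ∨ v ∈ P₂ ∨ v ∈ P₃) ∧
    (∀ u v : V, H.Adj u v ↔
      ConsecIn P₁ u v ∨ ConsecIn P₂ u v ∨ ConsecIn P₃ u v ∨
      (u ≠ v ∧ u ∈ ({b₁, b₂, b₃} : Set V) ∧ v ∈ ({b₁, b₂, b₃} : Set V)))

/-- `H` is a theta: three internally vertex-disjoint chordless paths of length at least 2
with common extremities `a` and `b`, whose only edges are the path edges. -/
def IsTheta {V : Type*} (H : SimpleGraph V) : Prop :=
  ∃ (P₁ P₂ P₃ : List V) (a b : V),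
    P₁.Nodup ∧ P₂.Nodup ∧ P₃.Nodup ∧
    3 ≤ P₁.length ∧ 3 ≤ P₂.length ∧ 3 ≤ P₃.length ∧
    a ≠ b ∧
    P₁.head? = some a ∧ P₂.head? = some a ∧ P₃.head? = some a ∧
    P₁.getLast? = some b ∧ P₂.getLast? = some b ∧ P₃.getLast? = some b ∧
    P₁.tail.dropLast.Disjoint P₂.tail.dropLast ∧
    P₁.tail.dropLast.Disjoint P₃.tail.dropLast ∧
    P₂.tail.dropLast.Disjoint P₃.tail.dropLast ∧
    (∀ v : V, v ∈ P₁ ∨ v ∈ P₂ ∨ v ∈ P₃) ∧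
    (∀ u v : V, H.Adj u v ↔ ConsecIn P₁ u v ∨ ConsecIn P₂ u v ∨ ConsecIn P₃ u v)

/-- `H` is a broken wheel: it consists of a hole (chordless cycle of length `n ≥ 4`,
encoded by an injective map `c : ZMod n → V`) together with a center `x` whose neighbors
on the hole are the vertices `c i`, `i ∈ N`, with `|N| ≥ 3`; moreover at least two sectors
(subpaths of the rim between consecutive neighbors of `x`) have length at least 2, which is
expressed by the existence of two non-neighbor rim positions `i ≠ j` such that both open
arcs between them contain a neighbor of `x`. -/
def IsBrokenWheel {V : Type*} (H : SimpleGraph V) : Prop :=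
  ∃ (n : ℕ) (_ : 4 ≤ n) (c : ZMod n → V) (x : V) (N : Set (ZMod n)),
    Function.Injective c ∧ (∀ i, c i ≠ x) ∧
    (∀ v : V, v = x ∨ ∃ i, v = c i) ∧
    3 ≤ N.ncard ∧
    (∀ u v : V, H.Adj u v ↔
      (∃ i : ZMod n, (u = c i ∧ v = c (i + 1)) ∨ (v = c i ∧ u = c (i + 1))) ∨
      (∃ i ∈ N, (u = x ∧ v = c i) ∨ (v = x ∧ u = c i))) ∧
    (∃ i j : ZMod n, i ∉ N ∧ j ∉ N ∧ i ≠ j ∧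
      (∃ k ∈ N, (k - i).val < (j - i).val) ∧
      (∃ k ∈ N, (k - j).val < (i - j).val))

/-- `P_4 + P_1`: the disjoint union of a path on four vertices and an isolated vertex. -/
def P4plusP1 : SimpleGraph (Fin 4 ⊕ Fin 1) := pathGraph 4 ⊕g (⊥ : SimpleGraph (Fin 1))

/-- Five vertices with the adjacencies of `P_4 + P_1` are automatically distinct, hence induce
a copy of `P_4 + P_1`. -/
lemma nonempty_P4plusP1_embedding {V : Type*} {H : SimpleGraph V} {a b c d e : V}
    (hab : H.Adj a b) (hbc : H.Adj b c) (hcd : H.Adj c d)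
    (hac : ¬ H.Adj a c) (had : ¬ H.Adj a d) (hbd : ¬ H.Adj b d)
    (hea : ¬ H.Adj e a) (heb : ¬ H.Adj e b) (hec : ¬ H.Adj e c) (hed : ¬ H.Adj e d) :
    Nonempty (P4plusP1 ↪g H) := by
  have hca : ¬ H.Adj c a := fun h => hac h.symm
  have hda : ¬ H.Adj d a := fun h => had h.symm
  have hdb : ¬ H.Adj d b := fun h => hbd h.symm
  have hae : ¬ H.Adj a e := fun h => hea h.symm
  have hbe : ¬ H.Adj b e := fun h => heb h.symm
  have hce : ¬ H.Adj c e := fun h => hec h.symm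
  have hde : ¬ H.Adj d e := fun h => hed h.symm
  have hba := hab.symm
  have hcb := hbc.symm
  have hdc := hcd.symm
  have hadj : ∀ i j, H.Adj (Sum.elim ![a, b, c, d] ![e] i) (Sum.elim ![a, b, c, d] ![e] j) ↔
      P4plusP1.Adj i j := by
    rintro (i | i) (j | j) <;> fin_cases i <;> fin_cases j <;>
      simp [P4plusP1, pathGraph_adj, *]
  have hinj : Function.Injective (Sum.elim ![a, b, c, d] ![e]) := by
    have := H.ne_of_adj hab
    have := H.ne_of_adj hbc
    have := H.ne_of_adj hcd
    rintro (i | i) (j | j) <;> fin_cases i <;> fin_cases j <;> simp <;> grind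
  exact ⟨⟨⟨_, hinj⟩, hadj _ _⟩⟩

/-- A four-cycle without chords on distinct vertices is an induced `C_4`. -/
lemma nonempty_cycleGraph_four_embedding {V : Type*} {H : SimpleGraph V} {a b c d : V}
    (hab : H.Adj a b) (hbc : H.Adj b c) (hcd : H.Adj c d) (hda : H.Adj d a)
    (hac : ¬ H.Adj a c) (hbd : ¬ H.Adj b d) (hac' : a ≠ c) (hbd' : b ≠ d) :
    Nonempty (cycleGraph 4 ↪g H) := by
  have hadj : ∀ i j, H.Adj (![a, b, c, d] i) (![a, b, c, d] j) ↔ (cycleGraph 4).Adj i j := by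
    have hca : ¬ H.Adj c a := fun h => hac h.symm
    have hdb : ¬ H.Adj d b := fun h => hbd h.symm
    have hba := hab.symm
    have hcb := hbc.symm
    have hdc := hcd.symm
    have had := hda.symm
    intro i j
    fin_cases i <;> fin_cases j <;> simp [cycleGraph_adj, *] <;> decide
  have hinj : Function.Injective ![a, b, c, d] := by
    have := H.ne_of_adj hab
    have := H.ne_of_adj hbc
    have := H.ne_of_adj hcd
    have := H.ne_of_adj hda
    intro i j
    fin_cases i <;> fin_cases j <;> simp <;> grind
  exact ⟨⟨⟨_, hinj⟩, hadj _ _⟩⟩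

/-- A nonempty duplicate-free list, viewed as an injective enumeration. -/
lemma exists_enumeration {V : Type*} {P : List V} {a b : V} (hP : P.Nodup)
    (ha : P.head? = some a) (hb : P.getLast? = some b) :
    ∃ f : ℕ → V, f 0 = a ∧ f (P.length - 1) = b ∧
      (∀ i j, i < P.length → j < P.length → f i = f j → i = j) ∧
      (∀ i, i < P.length → f i ∈ P) ∧
      (∀ i, 0 < i → i < P.length → f i ∈ P.tail) ∧
      (∀ i, 0 < i → i + 1 < P.length → f i ∈ P.tail.dropLast) ∧
      (∀ u v, ConsecIn P u v ↔
        ∃ i, i + 1 < P.length ∧ (u = f i ∧ v = f (i + 1) ∨ v = f i ∧ u = f (i + 1))) := by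
  have hf : ∀ i (hi : i < P.length), P.getD i a = P[i] := fun i hi => by
    simp [hi]
  have consec : ∀ u v, (∃ l₁ l₂ : List V, P = l₁ ++ u :: v :: l₂) ↔
      ∃ i, i + 1 < P.length ∧ u = P.getD i a ∧ v = P.getD (i + 1) a := by
    intro u v
    constructor
    · rintro ⟨l₁, l₂, rfl⟩
      exact ⟨l₁.length, by simp, by simp, by simp⟩
    · rintro ⟨i, hi, rfl, rfl⟩
      refine ⟨P.take i, P.drop (i + 2), ?_⟩
      rw [hf i (by omega), hf _ hi, List.getElem_cons_drop, List.getElem_cons_drop,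
        List.take_append_drop]
  refine ⟨fun i => P.getD i a, ?_, ?_, ?_, ?_, ?_, ?_, ?_⟩
  · cases P <;> simp_all
  · rw [List.getLast?_eq_getElem?] at hb
    simp [hb]
  · intro i j hi hj h
    simp only [hf i hi, hf j hj] at h
    exact (hP.getElem_inj_iff).1 h
  · intro i hi
    simp only [hf i hi, List.getElem_mem]
  · intro i h0 hi
    simp only [hf i hi]
    refine List.mem_iff_getElem.2 ⟨i - 1, by simp; omega, ?_⟩
    simp [Nat.sub_add_cancel h0]
  · intro i h0 hi
    simp only [hf i (by omega)]
    refine List.mem_iff_getElem.2 ⟨i - 1, by simp; omega, ?_⟩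
    simp [Nat.sub_add_cancel h0]
  · intro u v
    simp only [ConsecIn, exists_or, consec, and_or_left]

/-- A prism with two paths of length at least two contains `P_4 + P_1`. -/
lemma P4plusP1_of_prism {V : Type*} {H : SimpleGraph V} {P₁ P₂ P₃ : List V}
    {a₁ b₁ a₂ b₂ a₃ b₃ : V} (hP₁ : P₁.Nodup) (hP₂ : P₂.Nodup) (hP₃ : P₃.Nodup)
    (hl₁ : 3 ≤ P₁.length) (hl₂ : 3 ≤ P₂.length) (hl₃ : 2 ≤ P₃.length)
    (ha₁ : P₁.head? = some a₁) (hb₁ : P₁.getLast? = some b₁)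
    (ha₂ : P₂.head? = some a₂) (hb₂ : P₂.getLast? = some b₂)
    (ha₃ : P₃.head? = some a₃) (hb₃ : P₃.getLast? = some b₃)
    (h₁₂ : P₁.Disjoint P₂) (h₁₃ : P₁.Disjoint P₃) (h₂₃ : P₂.Disjoint P₃)
    (hadj : ∀ u v : V, H.Adj u v ↔
      ConsecIn P₁ u v ∨ ConsecIn P₂ u v ∨ ConsecIn P₃ u v ∨
      (u ≠ v ∧ u ∈ ({a₁, a₂, a₃} : Set V) ∧ v ∈ ({a₁, a₂, a₃} : Set V)) ∨
      (u ≠ v ∧ u ∈ ({b₁, b₂, b₃} : Set V) ∧ v ∈ ({b₁, b₂, b₃} : Set V))) :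
    Nonempty (P4plusP1 ↪g H) := by
  obtain ⟨f, rfl, rfl, hf, hfP, -, -, hfc⟩ := exists_enumeration hP₁ ha₁ hb₁
  obtain ⟨g, rfl, rfl, hg, hgP, -, -, hgc⟩ := exists_enumeration hP₂ ha₂ hb₂
  obtain ⟨k, rfl, rfl, hk, hkP, -, -, hkc⟩ := exists_enumeration hP₃ ha₃ hb₃
  have hfg : ∀ i j, i < P₁.length → j < P₂.length → f i ≠ g j :=
    fun i j hi hj h => h₁₂ (hfP i hi) (h ▸ hgP j hj)
  have hfk : ∀ i j, i < P₁.length → j < P₃.length → f i ≠ k j :=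
    fun i j hi hj h => h₁₃ (hfP i hi) (h ▸ hkP j hj)
  have hgk : ∀ i j, i < P₂.length → j < P₃.length → g i ≠ k j :=
    fun i j hi hj h => h₂₃ (hgP i hi) (h ▸ hkP j hj)
  clear hfP hgP hkP h₁₂ h₁₃ h₂₃ ha₁ ha₂ ha₃ hb₁ hb₂ hb₃ hP₁ hP₂ hP₃
  simp only [hfc, hgc, hkc, Set.mem_insert_iff, Set.mem_singleton_iff] at hadj
  apply nonempty_P4plusP1_embedding (a := f 1) (b := f 0) (c := g 0) (d := g 1)
    (e := k (P₃.length - 1)) <;> rw [hadj]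
  · exact .inl ⟨0, by omega, by simp⟩
  · simp [hfg 0 0 (by omega) (by omega)]
  · exact .inr (.inl ⟨0, by omega, by simp⟩)
  all_goals grind

/-- A prism with two paths of length one contains `C_4`. -/
lemma cycleGraph_four_of_prism {V : Type*} {H : SimpleGraph V} {P₁ P₂ P₃ : List V}
    {a₁ b₁ a₂ b₂ a₃ b₃ : V} (hP₁ : P₁.Nodup) (hP₂ : P₂.Nodup) (hP₃ : P₃.Nodup)
    (hl₁ : P₁.length = 2) (hl₂ : P₂.length = 2) (hl₃ : 2 ≤ P₃.length)
    (ha₁ : P₁.head? = some a₁) (hb₁ : P₁.getLast? = some b₁)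
    (ha₂ : P₂.head? = some a₂) (hb₂ : P₂.getLast? = some b₂)
    (ha₃ : P₃.head? = some a₃) (hb₃ : P₃.getLast? = some b₃)
    (h₁₂ : P₁.Disjoint P₂) (h₁₃ : P₁.Disjoint P₃) (h₂₃ : P₂.Disjoint P₃)
    (hadj : ∀ u v : V, H.Adj u v ↔
      ConsecIn P₁ u v ∨ ConsecIn P₂ u v ∨ ConsecIn P₃ u v ∨
      (u ≠ v ∧ u ∈ ({a₁, a₂, a₃} : Set V) ∧ v ∈ ({a₁, a₂, a₃} : Set V)) ∨
      (u ≠ v ∧ u ∈ ({b₁, b₂, b₃} : Set V) ∧ v ∈ ({b₁, b₂, b₃} : Set V))) :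
    Nonempty (cycleGraph 4 ↪g H) := by
  obtain ⟨f, rfl, rfl, hf, hfP, -, -, hfc⟩ := exists_enumeration hP₁ ha₁ hb₁
  obtain ⟨g, rfl, rfl, hg, hgP, -, -, hgc⟩ := exists_enumeration hP₂ ha₂ hb₂
  obtain ⟨k, rfl, rfl, hk, hkP, -, -, hkc⟩ := exists_enumeration hP₃ ha₃ hb₃
  have hfg : ∀ i j, i < P₁.length → j < P₂.length → f i ≠ g j :=
    fun i j hi hj h => h₁₂ (hfP i hi) (h ▸ hgP j hj)
  have hfk : ∀ i j, i < P₁.length → j < P₃.length → f i ≠ k j :=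
    fun i j hi hj h => h₁₃ (hfP i hi) (h ▸ hkP j hj)
  have hgk : ∀ i j, i < P₂.length → j < P₃.length → g i ≠ k j :=
    fun i j hi hj h => h₂₃ (hgP i hi) (h ▸ hkP j hj)
  clear hfP hgP hkP h₁₂ h₁₃ h₂₃ ha₁ ha₂ ha₃ hb₁ hb₂ hb₃ hP₁ hP₂ hP₃
  simp only [hfc, hgc, hkc, Set.mem_insert_iff, Set.mem_singleton_iff] at hadj
  simp only [hl₁, hl₂, Nat.add_one_sub_one] at *
  apply nonempty_cycleGraph_four_embedding (a := f 0) (b := f 1) (c := g 1) (d := g 0) <;>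
    try rw [hadj]
  · exact .inl ⟨0, by omega, by simp⟩
  · simp [hfg 1 1 (by omega) (by omega)]
  · exact .inr (.inl ⟨0, by omega, by simp⟩)
  · simp [(hfg 0 0 (by omega) (by omega)).symm]
  all_goals grind

/-- A pyramid whose first two paths have length at least two contains `P_4 + P_1` or `C_4`. -/
lemma P4plusP1_or_cycleGraph_four_of_pyramid {V : Type*} {H : SimpleGraph V} {P₁ P₂ P₃ : List V}
    {a b₁ b₂ b₃ : V} (hP₁ : P₁.Nodup) (hP₂ : P₂.Nodup) (hP₃ : P₃.Nodup)
    (hl₁ : 3 ≤ P₁.length) (hl₂ : 3 ≤ P₂.length) (hl₃ : 2 ≤ P₃.length)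
    (ha₁ : P₁.head? = some a) (ha₂ : P₂.head? = some a) (ha₃ : P₃.head? = some a)
    (hb₁ : P₁.getLast? = some b₁) (hb₂ : P₂.getLast? = some b₂) (hb₃ : P₃.getLast? = some b₃)
    (h₁₂ : P₁.tail.Disjoint P₂.tail) (h₁₃ : P₁.tail.Disjoint P₃.tail)
    (h₂₃ : P₂.tail.Disjoint P₃.tail)
    (hadj : ∀ u v : V, H.Adj u v ↔
      ConsecIn P₁ u v ∨ ConsecIn P₂ u v ∨ ConsecIn P₃ u v ∨
      (u ≠ v ∧ u ∈ ({b₁, b₂, b₃} : Set V) ∧ v ∈ ({b₁, b₂, b₃} : Set V))) :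
    Nonempty (P4plusP1 ↪g H) ∨ Nonempty (cycleGraph 4 ↪g H) := by
  obtain ⟨f, hf0, rfl, hf, -, hfP, -, hfc⟩ := exists_enumeration hP₁ ha₁ hb₁
  obtain ⟨g, hg0, rfl, hg, -, hgP, -, hgc⟩ := exists_enumeration hP₂ ha₂ hb₂
  obtain ⟨k, hk0, rfl, hk, -, hkP, -, hkc⟩ := exists_enumeration hP₃ ha₃ hb₃
  have hfg : ∀ i j, i < P₁.length → j < P₂.length → f i = g j → i = 0 ∧ j = 0 := by
    intro i j hi hj h
    have := @h₁₂ (f i)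
    grind
  have hfk : ∀ i j, i < P₁.length → j < P₃.length → f i = k j → i = 0 ∧ j = 0 := by
    intro i j hi hj h
    have := @h₁₃ (f i)
    grind
  have hgk : ∀ i j, i < P₂.length → j < P₃.length → g i = k j → i = 0 ∧ j = 0 := by
    intro i j hi hj h
    have := @h₂₃ (g i)
    grind
  clear hfP hgP hkP h₁₂ h₁₃ h₂₃ ha₁ ha₂ ha₃ hb₁ hb₂ hb₃ hP₁ hP₂ hP₃
  simp only [hfc, hgc, hkc, Set.mem_insert_iff, Set.mem_singleton_iff] at hadj
  clear hfc hgc hkc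
  obtain ⟨l, hl⟩ : ∃ l, P₁.length = l + 3 := ⟨_, (Nat.sub_add_cancel hl₁).symm⟩
  obtain ⟨m, hm⟩ : ∃ m, P₂.length = m + 3 := ⟨_, (Nat.sub_add_cancel hl₂).symm⟩
  obtain ⟨n, hn⟩ : ∃ n, P₃.length = n + 2 := ⟨_, (Nat.sub_add_cancel hl₃).symm⟩
  simp only [hl, hm, hn, Nat.add_succ_sub_one] at *
  have hf12 : H.Adj (f (l + 1)) (f (l + 2)) := (hadj _ _).2 (.inl ⟨l + 1, by omega, by simp⟩)
  have hg12 : H.Adj (g (m + 2)) (g (m + 1)) :=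
    (hadj _ _).2 (.inr (.inl ⟨m + 1, by omega, by simp⟩))
  have hfg2 : H.Adj (f (l + 2)) (g (m + 2)) := by
    rw [hadj]
    clear hadj
    grind
  have path : ∀ e, ¬ H.Adj e (f (l + 1)) → ¬ H.Adj e (f (l + 2)) → ¬ H.Adj e (g (m + 2)) →
      ¬ H.Adj e (g (m + 1)) → Nonempty (P4plusP1 ↪g H) := by
    intro e h₁ h₂ h₃ h₄
    refine nonempty_P4plusP1_embedding hf12 hfg2 hg12 ?_ ?_ ?_ h₁ h₂ h₃ h₄ <;> rw [hadj] <;>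
      clear h₁ h₂ h₃ h₄ hf12 hg12 hfg2 hadj <;> grind
  by_cases hn0 : n = 0
  · subst hn0
    have hk01 : H.Adj (k 0) (k 1) := (hadj _ _).2 (.inr (.inr (.inl ⟨0, by omega, by simp⟩)))
    by_cases hl0 : l = 0
    · subst hl0
      right
      apply nonempty_cycleGraph_four_embedding (a := f 0) (b := f 1) (c := f 2) (d := k 1)
      · exact (hadj _ _).2 (.inl ⟨0, by omega, by simp⟩)
      · exact hf12
      · rw [hadj]; clear path hk01 hf12 hg12 hfg2 hadj; grind
      · rw [hf0, ← hk0]; exact hk01.symm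
      · rw [hadj]; clear path hk01 hf12 hg12 hfg2 hadj; grind
      · rw [hadj]; clear path hk01 hf12 hg12 hfg2 hadj; grind
      · grind
      · grind
    by_cases hm0 : m = 0
    · subst hm0
      right
      apply nonempty_cycleGraph_four_embedding (a := g 0) (b := g 1) (c := g 2) (d := k 1)
      · exact (hadj _ _).2 (.inr (.inl ⟨0, by omega, by simp⟩))
      · exact hg12.symm
      · rw [hadj]; clear path hk01 hf12 hg12 hfg2 hadj; grind
      · rw [hg0, ← hk0]; exact hk01.symm
      · rw [hadj]; clear path hk01 hf12 hg12 hfg2 hadj; grind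
      · rw [hadj]; clear path hk01 hf12 hg12 hfg2 hadj; grind
      · grind
      · grind
    left
    apply path (f 0) <;> rw [hadj] <;> clear path hk01 hf12 hg12 hfg2 hadj <;> grind
  · left
    apply path (k n) <;> rw [hadj] <;> clear path hf12 hg12 hfg2 hadj <;> grind

/-- A theta contains `P_4 + P_1` or `C_4`, when the first path is not longer than the others. -/
lemma P4plusP1_or_cycleGraph_four_of_theta {V : Type*} {H : SimpleGraph V} {P₁ P₂ P₃ : List V}
    {a b : V} (hP₁ : P₁.Nodup) (hP₂ : P₂.Nodup) (hP₃ : P₃.Nodup)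
    (hl₁ : 3 ≤ P₁.length) (hl₂ : P₁.length ≤ P₂.length) (hl₃ : P₁.length ≤ P₃.length)
    (ha₁ : P₁.head? = some a) (ha₂ : P₂.head? = some a) (ha₃ : P₃.head? = some a)
    (hb₁ : P₁.getLast? = some b) (hb₂ : P₂.getLast? = some b) (hb₃ : P₃.getLast? = some b)
    (h₁₂ : P₁.tail.dropLast.Disjoint P₂.tail.dropLast)
    (h₁₃ : P₁.tail.dropLast.Disjoint P₃.tail.dropLast)
    (h₂₃ : P₂.tail.dropLast.Disjoint P₃.tail.dropLast)
    (hadj : ∀ u v : V, H.Adj u v ↔ ConsecIn P₁ u v ∨ ConsecIn P₂ u v ∨ ConsecIn P₃ u v) :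
    Nonempty (P4plusP1 ↪g H) ∨ Nonempty (cycleGraph 4 ↪g H) := by
  obtain ⟨f, hf0, hf1, hf, -, -, hfP, hfc⟩ := exists_enumeration hP₁ ha₁ hb₁
  obtain ⟨g, hg0, hg1, hg, -, -, hgP, hgc⟩ := exists_enumeration hP₂ ha₂ hb₂
  obtain ⟨k, hk0, hk1, hk, -, -, hkP, hkc⟩ := exists_enumeration hP₃ ha₃ hb₃
  simp only [hfc, hgc, hkc] at hadj
  clear ha₁ ha₂ ha₃ hb₁ hb₂ hb₃ hP₁ hP₂ hP₃ hfc hgc hkc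
  obtain ⟨l, hl⟩ : ∃ l, P₁.length = l + 3 := ⟨_, (Nat.sub_add_cancel hl₁).symm⟩
  obtain ⟨m, hm⟩ : ∃ m, P₂.length = m + 3 := ⟨_, (Nat.sub_add_cancel (hl₁.trans hl₂)).symm⟩
  obtain ⟨n, hn⟩ : ∃ n, P₃.length = n + 3 := ⟨_, (Nat.sub_add_cancel (hl₁.trans hl₃)).symm⟩
  simp only [hl, hm, hn, Nat.add_succ_sub_one] at *
  have hfg : ∀ i j, i < l + 3 → j < m + 3 → f i = g j →
      i = 0 ∧ j = 0 ∨ i = l + 2 ∧ j = m + 2 := by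
    intro i j hi hj h
    have := @h₁₂ (f i)
    grind
  have hfk : ∀ i j, i < l + 3 → j < n + 3 → f i = k j →
      i = 0 ∧ j = 0 ∨ i = l + 2 ∧ j = n + 2 := by
    intro i j hi hj h
    have := @h₁₃ (f i)
    grind
  have hgk : ∀ i j, i < m + 3 → j < n + 3 → g i = k j →
      i = 0 ∧ j = 0 ∨ i = m + 2 ∧ j = n + 2 := by
    intro i j hi hj h
    have := @h₂₃ (g i)
    grind
  clear hfP hgP hkP h₁₂ h₁₃ h₂₃
  have hf01 : H.Adj (f 0) (f 1) := (hadj _ _).2 (.inl ⟨0, by omega, by simp⟩)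
  have hg01 : H.Adj (g 0) (g 1) := (hadj _ _).2 (.inr (.inl ⟨0, by omega, by simp⟩))
  have hk01 : H.Adj (k 0) (k 1) := (hadj _ _).2 (.inr (.inr ⟨0, by omega, by simp⟩))
  have hg12 : H.Adj (g 1) (g 2) := (hadj _ _).2 (.inr (.inl ⟨1, by omega, by simp⟩))
  have hk12 : H.Adj (k 1) (k 2) := (hadj _ _).2 (.inr (.inr ⟨1, by omega, by simp⟩))
  have hf12 : H.Adj (f 1) (f 2) := (hadj _ _).2 (.inl ⟨1, by omega, by simp⟩)
  by_cases hm0 : m = 0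
  · obtain rfl : l = 0 := by omega
    subst hm0
    right
    apply nonempty_cycleGraph_four_embedding hf01 hf12 (d := g 1)
    · rw [hf1, ← hg1]; exact hg12.symm
    · rw [hf0, ← hg0]; exact hg01.symm
    · rw [hadj]; clear hf01 hg01 hk01 hg12 hk12 hf12 hadj; grind
    · rw [hadj]; clear hf01 hg01 hk01 hg12 hk12 hf12 hadj; grind
    · grind
    · grind
  by_cases hn0 : n = 0
  · obtain rfl : l = 0 := by omega
    subst hn0
    right
    apply nonempty_cycleGraph_four_embedding hf01 hf12 (d := k 1)
    · rw [hf1, ← hk1]; exact hk12.symm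
    · rw [hf0, ← hk0]; exact hk01.symm
    · rw [hadj]; clear hf01 hg01 hk01 hg12 hk12 hf12 hadj; grind
    · rw [hadj]; clear hf01 hg01 hk01 hg12 hk12 hf12 hadj; grind
    · grind
    · grind
  left
  apply nonempty_P4plusP1_embedding hf01.symm (c := g 1) (d := g 2) (e := k (n + 1))
  · rw [hf0, ← hg0]; exact hg01
  · exact hg12
  all_goals rw [hadj]; clear hf01 hg01 hk01 hg12 hk12 hf12 hadj; grind

/-- A broken wheel with a rim of length five or six has a sector of length exactly two. -/
lemma exists_sector_of_length_two {n : ℕ} (hn : n = 5 ∨ n = 6) {N : Set (ZMod n)}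
    (hN : 3 ≤ N.ncard) {i j : ZMod n} (hi : i ∉ N) (hj : j ∉ N)
    (hk : ∃ k ∈ N, (k - i).val < (j - i).val) (hk' : ∃ k ∈ N, (k - j).val < (i - j).val) :
    ∃ p, p ∈ N ∧ p + 1 ∉ N ∧ p + 2 ∈ N := by
  have key : ∀ N : Finset (ZMod n), (¬ ∃ p, p ∈ N ∧ p + 1 ∉ N ∧ p + 2 ∈ N) → 3 ≤ N.card →
      ∀ i, i ∉ N → ∀ j, j ∉ N → (∃ k ∈ N, (k - i).val < (j - i).val) →
      ¬ ∃ k ∈ N, (k - j).val < (i - j).val := by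
    clear * - hn
    obtain rfl | rfl := hn <;> decide +kernel
  have : NeZero n := ⟨by omega⟩
  obtain ⟨N, rfl⟩ : ∃ M : Finset (ZMod n), N = M := ⟨N.toFinite.toFinset, by simp⟩
  simp only [Set.ncard_coe_finset, Finset.mem_coe] at *
  by_contra hp
  exact key N hp hN i hi j hj hk hk'

lemma P4plusP1_or_cycleGraph_four_of_brokenWheel {V : Type*} {H : SimpleGraph V}
    (h : IsBrokenWheel H) : Nonempty (P4plusP1 ↪g H) ∨ Nonempty (cycleGraph 4 ↪g H) := by
  obtain ⟨n, hn, c, x, N, hc, hx, -, hN, hadj, i, j, hi, hj, -, hk, hk'⟩ := h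
  have rim : ∀ i j, H.Adj (c i) (c j) ↔ j = i + 1 ∨ i = j + 1 := by
    intro i j
    simp only [hadj, hc.eq_iff, hx, false_and, or_self, and_false, exists_const, or_false]
    grind
  have spoke : ∀ i, H.Adj x (c i) ↔ i ∈ N := by
    intro i
    simp only [hadj, hc.eq_iff, hx, fun i => (hx i).symm, false_and, and_false, or_self,
      exists_const, false_or, true_and, or_false]
    grind
  obtain rfl | hn56 | hn7 : n = 4 ∨ (n = 5 ∨ n = 6) ∨ 7 ≤ n := by omega
  · right
    apply nonempty_cycleGraph_four_embedding (a := c 0) (b := c 1) (c := c 2) (d := c 3) <;>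
      simp only [rim, ne_eq, hc.eq_iff] <;> decide
  · right
    have cast_ne : ∀ m : ℕ, 0 < m → m < n → (m : ZMod n) ≠ 0 := by
      intro m h0 hm h
      rw [ZMod.natCast_eq_zero_iff] at h
      exact absurd (Nat.le_of_dvd h0 h) (by omega)
    obtain ⟨p, hp, hp1, hp2⟩ := exists_sector_of_length_two hn56 hN hi hj hk hk'
    apply nonempty_cycleGraph_four_embedding (a := x) (b := c p) (c := c (p + 1))
      (d := c (p + 2))
    · exact (spoke _).2 hp
    · exact (rim _ _).2 (.inl rfl)
    · exact (rim _ _).2 (.inl (by ring))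
    · exact ((spoke _).2 hp2).symm
    · rwa [spoke]
    · rw [rim]
      rintro (h | h)
      · exact cast_ne 1 (by omega) (by omega) (by push_cast; linear_combination h)
      · exact cast_ne 3 (by omega) (by omega) (by push_cast; linear_combination -h)
    · exact (hx _).symm
    · rw [ne_eq, hc.eq_iff]
      intro h
      exact cast_ne 2 (by omega) (by omega) (by push_cast; linear_combination -h)
  · left
    have rim_cast : ∀ i j : ℕ, i + 1 < n → j + 1 < n →
        (H.Adj (c i) (c j) ↔ j = i + 1 ∨ i = j + 1) := by
      intro i j hi hj
      rw [rim]
      norm_cast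
      rw [ZMod.natCast_eq_natCast_iff', ZMod.natCast_eq_natCast_iff', Nat.mod_eq_of_lt hi,
        Nat.mod_eq_of_lt hj, Nat.mod_eq_of_lt (by omega), Nat.mod_eq_of_lt (by omega)]
    apply nonempty_P4plusP1_embedding (a := c (0 : ℕ)) (b := c (1 : ℕ)) (c := c (2 : ℕ))
      (d := c (3 : ℕ)) (e := c (5 : ℕ)) <;>
      rw [rim_cast _ _ (by omega) (by omega)] <;> omega

lemma P4plusP1_or_cycleGraph_four_of_longPrism {V : Type*} {H : SimpleGraph V}
    (h : IsLongPrism H) : Nonempty (P4plusP1 ↪g H) ∨ Nonempty (cycleGraph 4 ↪g H) := by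
  obtain ⟨P₁, P₂, P₃, a₁, b₁, a₂, b₂, a₃, b₃, hP₁, hP₂, hP₃, hl₁, hl₂, hl₃, -, ha₁, hb₁, ha₂, hb₂,
    ha₃, hb₃, h₁₂, h₁₃, h₂₃, -, hadj⟩ := h
  have hadj₁₃₂ : ∀ u v : V, H.Adj u v ↔
      ConsecIn P₁ u v ∨ ConsecIn P₃ u v ∨ ConsecIn P₂ u v ∨
      (u ≠ v ∧ u ∈ ({a₁, a₃, a₂} : Set V) ∧ v ∈ ({a₁, a₃, a₂} : Set V)) ∨
      (u ≠ v ∧ u ∈ ({b₁, b₃, b₂} : Set V) ∧ v ∈ ({b₁, b₃, b₂} : Set V)) := by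
    intro u v
    rw [hadj, Set.pair_comm a₃, Set.pair_comm b₃]
    tauto
  have hadj₂₃₁ : ∀ u v : V, H.Adj u v ↔
      ConsecIn P₂ u v ∨ ConsecIn P₃ u v ∨ ConsecIn P₁ u v ∨
      (u ≠ v ∧ u ∈ ({a₂, a₃, a₁} : Set V) ∧ v ∈ ({a₂, a₃, a₁} : Set V)) ∨
      (u ≠ v ∧ u ∈ ({b₂, b₃, b₁} : Set V) ∧ v ∈ ({b₂, b₃, b₁} : Set V)) := by
    intro u v
    rw [hadj, Set.pair_comm a₃, Set.pair_comm b₃, Set.insert_comm a₂, Set.insert_comm b₂]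
    tauto
  by_cases h₁ : P₁.length = 2 <;> by_cases h₂ : P₂.length = 2
  · exact .inr (cycleGraph_four_of_prism hP₁ hP₂ hP₃ h₁ h₂ hl₃ ha₁ hb₁ ha₂ hb₂ ha₃ hb₃
      h₁₂ h₁₃ h₂₃ hadj)
  · by_cases h₃ : P₃.length = 2
    · exact .inr (cycleGraph_four_of_prism hP₁ hP₃ hP₂ h₁ h₃ hl₂ ha₁ hb₁ ha₃ hb₃ ha₂ hb₂
        h₁₃ h₁₂ h₂₃.symm hadj₁₃₂)
    · exact .inl (P4plusP1_of_prism hP₂ hP₃ hP₁ (by omega) (by omega) hl₁ ha₂ hb₂ ha₃ hb₃ ha₁ hb₁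
        h₂₃ h₁₂.symm h₁₃.symm hadj₂₃₁)
  · by_cases h₃ : P₃.length = 2
    · exact .inr (cycleGraph_four_of_prism hP₂ hP₃ hP₁ h₂ h₃ hl₁ ha₂ hb₂ ha₃ hb₃ ha₁ hb₁
        h₂₃ h₁₂.symm h₁₃.symm hadj₂₃₁)
    · exact .inl (P4plusP1_of_prism hP₁ hP₃ hP₂ (by omega) (by omega) hl₂ ha₁ hb₁ ha₃ hb₃ ha₂ hb₂
        h₁₃ h₁₂ h₂₃.symm hadj₁₃₂)
  · exact .inl (P4plusP1_of_prism hP₁ hP₂ hP₃ (by omega) (by omega) hl₃ ha₁ hb₁ ha₂ hb₂ ha₃ hb₃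
      h₁₂ h₁₃ h₂₃ hadj)

/-- Let `H` be a long prism, a pyramid, a theta, or a broken wheel. Then
`H` contains either `P_4 + P_1` or `C_4` as an induced subgraph. -/
theorem stmt_16 {V : Type} (H : SimpleGraph V)
    (h : IsLongPrism H ∨ IsPyramid H ∨ IsTheta H ∨ IsBrokenWheel H) :
    Nonempty (P4plusP1 ↪g H) ∨ Nonempty (cycleGraph 4 ↪g H) := by
  obtain h | h | h | h := h
  · exact P4plusP1_or_cycleGraph_four_of_longPrism h
  · obtain ⟨P₁, P₂, P₃, a, b₁, b₂, b₃, hP₁, hP₂, hP₃, hl₁, hl₂, hl₃, hl, ha₁, ha₂, ha₃, hb₁, hb₂,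
      hb₃, h₁₂, h₁₃, h₂₃, -, hadj⟩ := h
    obtain ⟨h₁, h₂⟩ | ⟨h₁, h₃⟩ | ⟨h₂, h₃⟩ := hl
    · exact P4plusP1_or_cycleGraph_four_of_pyramid hP₁ hP₂ hP₃ h₁ h₂ hl₃ ha₁ ha₂ ha₃ hb₁ hb₂ hb₃
        h₁₂ h₁₃ h₂₃ hadj
    · refine P4plusP1_or_cycleGraph_four_of_pyramid hP₁ hP₃ hP₂ h₁ h₃ hl₂ ha₁ ha₃ ha₂ hb₁ hb₃ hb₂
        h₁₃ h₁₂ h₂₃.symm fun u v => ?_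
      rw [hadj, Set.pair_comm b₃]
      tauto
    · refine P4plusP1_or_cycleGraph_four_of_pyramid hP₂ hP₃ hP₁ h₂ h₃ hl₁ ha₂ ha₃ ha₁ hb₂ hb₃ hb₁
        h₂₃ h₁₂.symm h₁₃.symm fun u v => ?_
      rw [hadj, Set.pair_comm b₃, Set.insert_comm b₂]
      tauto
  · obtain ⟨P₁, P₂, P₃, a, b, hP₁, hP₂, hP₃, hl₁, hl₂, hl₃, -, ha₁, ha₂, ha₃, hb₁, hb₂, hb₃,
      h₁₂, h₁₃, h₂₃, -, hadj⟩ := h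
    obtain ⟨h₂, h₃⟩ | ⟨h₁, h₃⟩ | ⟨h₁, h₂⟩ :
        (P₁.length ≤ P₂.length ∧ P₁.length ≤ P₃.length) ∨
        (P₂.length ≤ P₁.length ∧ P₂.length ≤ P₃.length) ∨
        (P₃.length ≤ P₁.length ∧ P₃.length ≤ P₂.length) := by omega
    · exact P4plusP1_or_cycleGraph_four_of_theta hP₁ hP₂ hP₃ hl₁ h₂ h₃ ha₁ ha₂ ha₃ hb₁ hb₂ hb₃
        h₁₂ h₁₃ h₂₃ hadj
    · exact P4plusP1_or_cycleGraph_four_of_theta hP₂ hP₁ hP₃ hl₂ h₁ h₃ ha₂ ha₁ ha₃ hb₂ hb₁ hb₃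
        h₁₂.symm h₂₃ h₁₃ fun u v => by rw [hadj]; tauto
    · exact P4plusP1_or_cycleGraph_four_of_theta hP₃ hP₁ hP₂ hl₃ h₁ h₂ ha₃ ha₁ ha₂ hb₃ hb₁ hb₂
        h₁₃.symm h₂₃.symm h₁₂ fun u v => by rw [hadj]; tauto
  · exact P4plusP1_or_cycleGraph_four_of_brokenWheel h
end

section
/- Every graph containing no induced subgraph isomorphic to P_4 + P_1 and no induced subgraph isomorphic to C_4 is K_{2,3}-induced-minor-free. -/
open SimpleGraph

/-- `G` is `H`-free: no induced subgraph of `G` is isomorphic to `H`. -/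
def IndFree {W V : Type*} (H : SimpleGraph W) (G : SimpleGraph V) : Prop :=
  IsEmpty (H ↪g G)

/-- `H` is an induced minor of `G`: there is a family of nonempty, pairwise disjoint,
connected branch sets in `G`, one for each vertex of `H`, such that two distinct vertices
of `H` are adjacent iff there is an edge of `G` between the corresponding branch sets.
(This is the standard model characterization of obtaining an isomorphic copy of `H` from
`G` by vertex deletions and edge contractions.) -/
def InducedMinor {W V : Type*} (H : SimpleGraph W) (G : SimpleGraph V) : Prop :=
  ∃ B : W → Set V,
    (∀ i, (B i).Nonempty) ∧
    (∀ i, (G.induce (B i)).Connected) ∧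
    (∀ i j, i ≠ j → Disjoint (B i) (B j)) ∧
    (∀ i j, i ≠ j → (H.Adj i j ↔ ∃ u ∈ B i, ∃ v ∈ B j, G.Adj u v))

section

variable {V : Type*} {G : SimpleGraph V}

/-- The distinctness of the five vertices follows from the adjacency conditions. -/
theorem IndFree.not_path_add_vertex (h : IndFree P4plusP1 G) {p q r s w : V}
    (hpq : G.Adj p q) (hqr : G.Adj q r) (hrs : G.Adj r s)
    (hpr : ¬ G.Adj p r) (hps : ¬ G.Adj p s) (hqs : ¬ G.Adj q s)
    (hwp : ¬ G.Adj w p) (hwq : ¬ G.Adj w q) (hwr : ¬ G.Adj w r) (hws : ¬ G.Adj w s) :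
    False := by
  have symm : ∀ x y, G.Adj x y → G.Adj y x := fun _ _ => Adj.symm
  have irrefl : ∀ x, ¬ G.Adj x x := fun _ => G.irrefl
  refine h.false ⟨⟨Sum.elim ![p, q, r, s] ![w], ?_⟩, ?_⟩
  · rintro (i | i) (j | j) hij <;> fin_cases i <;> fin_cases j <;> simp at hij ⊢ <;> grind
  · intro i j
    change G.Adj (Sum.elim ![p, q, r, s] ![w] i) (Sum.elim ![p, q, r, s] ![w] j) ↔ _
    rcases i with i | i <;> rcases j with j | j <;> fin_cases i <;> fin_cases j <;>
      simp [P4plusP1, pathGraph_adj] <;> grind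

theorem IndFree.not_four_cycle (h : IndFree (cycleGraph 4) G) {p q r s : V}
    (hpq : G.Adj p q) (hqr : G.Adj q r) (hrs : G.Adj r s) (hsp : G.Adj s p)
    (hpr : ¬ G.Adj p r) (hqs : ¬ G.Adj q s) (hpr' : p ≠ r) (hqs' : q ≠ s) : False := by
  have symm : ∀ x y, G.Adj x y → G.Adj y x := fun _ _ => Adj.symm
  have irrefl : ∀ x, ¬ G.Adj x x := fun _ => G.irrefl
  refine h.false ⟨⟨![p, q, r, s], ?_⟩, ?_⟩
  · intro i j hij
    fin_cases i <;> fin_cases j <;> simp at hij ⊢ <;> grind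
  · intro i j
    change G.Adj (![p, q, r, s] i) (![p, q, r, s] j) ↔ _
    fin_cases i <;> fin_cases j <;> simp [cycleGraph_adj] <;> grind

theorem exists_adj_crossing {X Y : Set V} (hX : (G.induce X).Connected) {x y : V}
    (hx : x ∈ X) (hxY : x ∈ Y) (hy : y ∈ X) (hyY : y ∉ Y) :
    ∃ u ∈ X, ∃ v ∈ X, u ∈ Y ∧ v ∉ Y ∧ G.Adj u v := by
  obtain ⟨p⟩ := hX.preconnected ⟨x, hx⟩ ⟨y, hy⟩
  obtain ⟨d, -, hd, hd'⟩ := p.exists_boundary_dart {z | z.1 ∈ Y} hxY hyY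
  exact ⟨d.fst, d.fst.2, d.snd, d.snd.2, hd, hd', d.adj⟩

/-- In a connected set `X`, either `S` and `T` are joined by an edge, or an induced path leads from
a vertex of `S` to two vertices outside `S`, the first of which is not in `T`. -/
theorem exists_adj_or_exists_path {X S T : Set V} (hX : (G.induce X).Connected) {x y : V}
    (hx : x ∈ X) (hxS : x ∈ S) (hy : y ∈ X) (hyT : y ∈ T) (hST : ∀ z ∈ X, z ∈ S → z ∉ T) :
    (∃ s ∈ X, ∃ t ∈ X, s ∈ S ∧ t ∈ T ∧ G.Adj s t) ∨
      ∃ s ∈ X, ∃ u ∈ X, ∃ v ∈ X, s ∈ S ∧ u ∉ S ∧ u ∉ T ∧ v ∉ S ∧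
        G.Adj s u ∧ G.Adj u v ∧ ¬ G.Adj s v := by
  by_cases h : ∃ s ∈ X, ∃ t ∈ X, s ∈ S ∧ t ∈ T ∧ G.Adj s t
  · exact .inl h
  · obtain ⟨u, hu, v, hv, huY, hvY, huv⟩ :=
      exists_adj_crossing (Y := {z | z ∈ S ∨ ∃ s ∈ X, s ∈ S ∧ G.Adj s z}) hX hx (.inl hxS) hy
        (by
          rintro (hyS | ⟨s, hs, hsS, hsy⟩)
          · exact hST y hy hyS hyT
          · exact h ⟨s, hs, y, hy, hsS, hyT, hsy⟩)
    simp only [Set.mem_ofPred_eq, not_or, not_exists, not_and] at huY hvY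
    have huS : u ∉ S := fun h' => hvY.2 u hu h' huv
    obtain ⟨s, hs, hsS, hsu⟩ := huY.resolve_left huS
    exact .inr ⟨s, hs, u, hu, v, hv, hsS, huS,
      fun huT => h ⟨s, hs, u, hu, hsS, huT, hsu⟩, hvY.1, hsu, huv, hvY.2 s hs hsS⟩

/-- If `d` and `e` both have neighbours in `B`, no edge `xt` of `A` has `t` adjacent to both `d` and
`e` and `x` adjacent to neither. -/
theorem not_adj_edge_with_common_end (h1 : IndFree P4plusP1 G) (h2 : IndFree (cycleGraph 4) G)
    {A B : Set V} (hAB : Disjoint A B) (hnAB : ∀ a ∈ A, ∀ b ∈ B, ¬ G.Adj a b) {d e x t b b' : V}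
    (hde : ¬ G.Adj d e) (hde' : d ≠ e) (hx : x ∈ A) (ht : t ∈ A) (hxt : G.Adj x t)
    (hxd : ¬ G.Adj x d) (hxe : ¬ G.Adj x e) (htd : G.Adj t d) (hte : G.Adj t e)
    (hb : b ∈ B) (hbd : G.Adj b d) (hb' : b' ∈ B) (hbe : G.Adj b' e) : False := by
  have symm : ∀ x y, G.Adj x y → G.Adj y x := fun _ _ => Adj.symm
  have common : ∀ z ∈ B, G.Adj z d → ¬ G.Adj z e := fun z hz hzd hze =>
    h2.not_four_cycle htd hzd.symm hze hte.symm (hnAB t ht z hz) hde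
      (hAB.ne_of_mem ht hz) hde'
  by_cases hbb : G.Adj b b'
  · apply h1.not_path_add_vertex hbd.symm hbb hbe (w := x) <;> grind
  · apply h1.not_path_add_vertex hxt htd hbd.symm (w := b') <;> grind

/-- Of three pairwise nonadjacent vertices attached to `A` and `B`, the first shares a neighbour
in `A` with one of the other two. -/
theorem exists_common_neighbor (h1 : IndFree P4plusP1 G) (h2 : IndFree (cycleGraph 4) G)
    {A B : Set V} (hA : (G.induce A).Connected) (hAB : Disjoint A B)
    (hnAB : ∀ a ∈ A, ∀ b ∈ B, ¬ G.Adj a b) {c d e : V}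
    (hcd : ¬ G.Adj c d) (hce : ¬ G.Adj c e) (hde : ¬ G.Adj d e) (hde' : d ≠ e)
    (hcA : ∃ a ∈ A, G.Adj a c) (hdA : ∃ a ∈ A, G.Adj a d)
    (hdB : ∃ b ∈ B, G.Adj b d) (heB : ∃ b ∈ B, G.Adj b e) :
    ∃ a ∈ A, G.Adj a c ∧ (G.Adj a d ∨ G.Adj a e) := by
  have symm : ∀ x y, G.Adj x y → G.Adj y x := fun _ _ => Adj.symm
  by_contra! hno
  obtain ⟨p, hp, hpc⟩ := hcA
  obtain ⟨q, hq, hqd⟩ := hdA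
  obtain ⟨b, hb, hbd⟩ := hdB
  obtain ⟨b', hb', hbe⟩ := heB
  have core : ∀ x ∈ A, ∀ t ∈ A, G.Adj x t → ¬ G.Adj x d → ¬ G.Adj x e → G.Adj t d →
      G.Adj t e → False := fun x hx t ht hxt hxd hxe htd hte =>
    not_adj_edge_with_common_end h1 h2 hAB hnAB hde hde' hx ht hxt hxd hxe htd hte hb hbd hb' hbe
  obtain ⟨s, hs, t, ht, hsc, htde, hst⟩ |
      ⟨s, hs, u, hu, v, hv, hsc, huc, hude, hvc, hsu, huv, hsv⟩ :=
    exists_adj_or_exists_path (S := {z | G.Adj z c}) (T := {z | G.Adj z d ∨ G.Adj z e}) hA hp hpc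
      hq (.inl hqd) (fun z hz hzc => by simpa using hno z hz hzc)
  · simp only [Set.mem_ofPred_eq] at hsc htde
    have hs' := hno s hs hsc
    have htc : ¬ G.Adj t c := fun h => by have := hno t ht h; tauto
    have htd : G.Adj t d := by
      by_contra htd
      have hte := htde.resolve_left htd
      apply h1.not_path_add_vertex hsc.symm hst hte (w := d) <;> grind
    have hte : G.Adj t e := by
      by_contra hte
      apply h1.not_path_add_vertex hsc.symm hst htd (w := e) <;> grind
    exact core s hs t ht hst hs'.1 hs'.2 htd hte
  · simp only [Set.mem_ofPred_eq, not_or] at hsc huc hude hvc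
    have hs' := hno s hs hsc
    have hvd : G.Adj v d := by
      by_contra hvd
      apply h1.not_path_add_vertex hsc.symm hsu huv (w := d) <;> grind
    have hve : G.Adj v e := by
      by_contra hve
      apply h1.not_path_add_vertex hsc.symm hsu huv (w := e) <;> grind
    exact core u hu v hv huv hude.1 hude.2 hvd hve

theorem not_three_common_attachments (h1 : IndFree P4plusP1 G) (h2 : IndFree (cycleGraph 4) G)
    {A B : Set V} (hA : (G.induce A).Connected) (hB : (G.induce B).Connected)
    (hAB : Disjoint A B) (hnAB : ∀ a ∈ A, ∀ b ∈ B, ¬ G.Adj a b) {c d e : V}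
    (hcd : ¬ G.Adj c d) (hce : ¬ G.Adj c e) (hde : ¬ G.Adj d e)
    (hcd' : c ≠ d) (hce' : c ≠ e) (hde' : d ≠ e)
    (hcA : ∃ a ∈ A, G.Adj a c) (hdA : ∃ a ∈ A, G.Adj a d) (heA : ∃ a ∈ A, G.Adj a e)
    (hcB : ∃ b ∈ B, G.Adj b c) (hdB : ∃ b ∈ B, G.Adj b d) (heB : ∃ b ∈ B, G.Adj b e) :
    False := by
  have common : ∀ x y, ¬ G.Adj x y → x ≠ y → ∀ a ∈ A, ∀ b ∈ B, G.Adj a x → G.Adj a y →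
      G.Adj b x → ¬ G.Adj b y := fun x y hxy hxy' a ha b hb hax hay hbx hby =>
    h2.not_four_cycle hax hbx.symm hby hay.symm (hnAB a ha b hb) hxy (hAB.ne_of_mem ha hb) hxy'
  have hnBA : ∀ b ∈ B, ∀ a ∈ A, ¬ G.Adj b a := fun b hb a ha h => hnAB a ha b hb h.symm
  have hdc : ¬ G.Adj d c := fun h => hcd h.symm
  have hec : ¬ G.Adj e c := fun h => hce h.symm
  have hed : ¬ G.Adj e d := fun h => hde h.symm
  have cA := exists_common_neighbor h1 h2 hA hAB hnAB hcd hce hde hde' hcA hdA hdB heB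
  have dA := exists_common_neighbor h1 h2 hA hAB hnAB hdc hde hce hce' hdA hcA hcB heB
  have eA := exists_common_neighbor h1 h2 hA hAB hnAB hec hed hcd hcd' heA hcA hcB hdB
  have cB := exists_common_neighbor h1 h2 hB hAB.symm hnBA hcd hce hde hde' hcB hdB hdA heA
  have dB := exists_common_neighbor h1 h2 hB hAB.symm hnBA hdc hde hce hce' hdB hcB hcA heA
  have eB := exists_common_neighbor h1 h2 hB hAB.symm hnBA hec hed hcd hcd' heB hcB hcA hdA
  have ncd := common c d hcd hcd'
  have nce := common c e hce hce'
  have nde := common d e hde hde'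
  clear common hcA hdA heA hcB hdB heB hnAB hnBA hA hB hAB h1 h2
  grind

/-- Some vertex of `C` has neighbours in both `A` and `B`. -/
def HasCommonAttachment (G : SimpleGraph V) (A B C : Set V) : Prop :=
  ∃ c ∈ C, (∃ a ∈ A, G.Adj a c) ∧ ∃ b ∈ B, G.Adj b c

/-- Some edge of `C` has one end attached to `A` only and the other attached to `B` only. -/
def HasAttachmentEdge (G : SimpleGraph V) (A B C : Set V) : Prop :=
  ∃ c ∈ C, ∃ c' ∈ C, G.Adj c c' ∧ (∃ a ∈ A, G.Adj a c) ∧ (∃ b ∈ B, G.Adj b c') ∧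
    (∀ b ∈ B, ¬ G.Adj b c) ∧ ∀ a ∈ A, ¬ G.Adj a c'

theorem hasCommonAttachment_or_hasAttachmentEdge (h1 : IndFree P4plusP1 G)
    (h2 : IndFree (cycleGraph 4) G) {A B C : Set V} (hC : (G.induce C).Connected)
    (hAB : Disjoint A B) (hnAB : ∀ a ∈ A, ∀ b ∈ B, ¬ G.Adj a b)
    (hCA : ∃ a ∈ A, ∃ c ∈ C, G.Adj a c) (hCB : ∃ b ∈ B, ∃ c ∈ C, G.Adj b c) {d e : V}
    (hde : ¬ G.Adj d e) (hde' : d ≠ e) (hCd : ∀ c ∈ C, ¬ G.Adj c d)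
    (hCe : ∀ c ∈ C, ¬ G.Adj c e) :
    HasCommonAttachment G A B C ∨ HasAttachmentEdge G A B C := by
  have symm : ∀ x y, G.Adj x y → G.Adj y x := fun _ _ => Adj.symm
  by_contra! hno
  obtain ⟨hcommon, hedge⟩ := hno
  obtain ⟨a₀, ha₀, p, hp, hap⟩ := hCA
  obtain ⟨b₀, hb₀, q, hq, hbq⟩ := hCB
  have hST : ∀ z ∈ C, (∃ a ∈ A, G.Adj a z) → ¬ ∃ b ∈ B, G.Adj b z :=
    fun z hz hzA hzB => hcommon ⟨z, hz, hzA, hzB⟩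
  have hedge' : ∀ s ∈ C, ∀ t ∈ C, (∃ a ∈ A, G.Adj a s) → (∃ b ∈ B, G.Adj b t) → ¬ G.Adj s t :=
    fun s hs t ht hsA htB hst => hedge ⟨s, hs, t, ht, hst, hsA, htB,
      fun b hb hbs => hST s hs hsA ⟨b, hb, hbs⟩, fun a ha hat => hST t ht ⟨a, ha, hat⟩ htB⟩
  obtain ⟨s, hs, t, ht, hsA, htB, hst⟩ |
      ⟨s, hs, u, hu, v, hv, ⟨a, ha, has⟩, huA, -, hvA, hsu, huv, hsv⟩ :=
    exists_adj_or_exists_path (S := {z | ∃ a ∈ A, G.Adj a z}) (T := {z | ∃ b ∈ B, G.Adj b z}) hC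
      hp ⟨a₀, ha₀, hap⟩ hq ⟨b₀, hb₀, hbq⟩ hST
  · exact hedge' s hs t ht hsA htB hst
  obtain ⟨t, ht, s', hs', htB, hsA, hts⟩ |
      ⟨t, ht, u', hu', v', hv', ⟨b, hb, hbt⟩, huB, -, hvB, htu, huv', htv⟩ :=
    exists_adj_or_exists_path (S := {z | ∃ b ∈ B, G.Adj b z}) (T := {z | ∃ a ∈ A, G.Adj a z}) hC
      hq ⟨b₀, hb₀, hbq⟩ hp ⟨a₀, ha₀, hap⟩ (fun z hz hzB hzA => hST z hz hzA hzB)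
  · exact hedge' s' hs' t ht hsA htB hts.symm
  simp only [Set.mem_ofPred_eq, not_exists, not_and] at huA hvA huB hvB
  have hadj : ∀ w, (∀ c ∈ C, ¬ G.Adj c w) → G.Adj a w ∧ G.Adj w b := by
    refine fun w hw => ⟨?_, ?_⟩ <;> by_contra hcon
    · apply h1.not_path_add_vertex has hsu huv (w := w) <;> grind
    · apply h1.not_path_add_vertex hbt htu huv' (w := w) <;> grind
  obtain ⟨had, hdb⟩ := hadj d hCd
  obtain ⟨hae, heb⟩ := hadj e hCe
  exact h2.not_four_cycle had hdb heb.symm hae.symm (hnAB a ha b hb) hde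
    (hAB.ne_of_mem ha hb) hde'

theorem not_two_hasAttachmentEdge (h1 : IndFree P4plusP1 G) {A B C D : Set V}
    (hnAB : ∀ a ∈ A, ∀ b ∈ B, ¬ G.Adj a b) (hCD : ∀ c ∈ C, ∀ d ∈ D, ¬ G.Adj c d) {e : V}
    (hCe : ∀ c ∈ C, ¬ G.Adj c e) (hDe : ∀ d ∈ D, ¬ G.Adj d e)
    (hC : HasAttachmentEdge G A B C) (hD : HasAttachmentEdge G A B D) : False := by
  have symm : ∀ x y, G.Adj x y → G.Adj y x := fun _ _ => Adj.symm
  obtain ⟨c, hc, c', hc', hcc, ⟨a, ha, hac⟩, ⟨b, hb, hbc⟩, hcB, hcA⟩ := hC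
  obtain ⟨d, hd, d', hd', hdd, -, -, hdB, hdA⟩ := hD
  by_cases hae : G.Adj a e
  · apply h1.not_path_add_vertex hcc.symm hac.symm hae (w := d') <;> grind
  by_cases hbe : G.Adj b e
  · apply h1.not_path_add_vertex hcc hbc.symm hbe (w := d) <;> grind
  apply h1.not_path_add_vertex hac hcc hbc.symm (w := e) <;> grind

/-- The edge `cc'` and the common neighbour `a` of `c`, `d` and `e` exclude a neighbour of `e` in
a set `B` that is anticomplete to `a` and `c`. -/
theorem not_adj_of_common_neighbor (h1 : IndFree P4plusP1 G) (h2 : IndFree (cycleGraph 4) G)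
    {B : Set V} {a c c' d e : V} (haB : a ∉ B) (hnaB : ∀ b ∈ B, ¬ G.Adj a b)
    (hcB : ∀ b ∈ B, ¬ G.Adj b c) (hcc : G.Adj c c') (hac : G.Adj a c) (hac' : ¬ G.Adj a c')
    (hcd : ¬ G.Adj c d) (hce : ¬ G.Adj c e) (hcd' : ¬ G.Adj c' d) (hce' : ¬ G.Adj c' e)
    (hde : ¬ G.Adj d e) (hne : d ≠ e) (had : G.Adj a d) (hae : G.Adj a e) {b : V} (hb : b ∈ B) :
    ¬ G.Adj b e := by
  have symm : ∀ x y, G.Adj x y → G.Adj y x := fun _ _ => Adj.symm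
  intro hbe
  have hbd : ¬ G.Adj b d := fun hbd =>
    h2.not_four_cycle had hbd.symm hbe hae.symm (hnaB b hb) hde (by grind) hne
  have hbc : G.Adj b c' := by
    by_contra hbc
    apply h1.not_path_add_vertex hcc.symm hac.symm had (w := b) <;> grind
  apply h1.not_path_add_vertex hbe.symm hbc hcc.symm (w := d) <;> grind

theorem not_hasAttachmentEdge (h1 : IndFree P4plusP1 G) (h2 : IndFree (cycleGraph 4) G)
    {A B C : Set V} (hAB : Disjoint A B) (hnAB : ∀ a ∈ A, ∀ b ∈ B, ¬ G.Adj a b) {d e : V}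
    (hde : ¬ G.Adj d e) (hne : d ≠ e) (hCd : ∀ c ∈ C, ¬ G.Adj c d) (hCe : ∀ c ∈ C, ¬ G.Adj c e)
    (heA : ∃ a ∈ A, G.Adj a e) (heB : ∃ b ∈ B, G.Adj b e) :
    ¬ HasAttachmentEdge G A B C := by
  have symm : ∀ x y, G.Adj x y → G.Adj y x := fun _ _ => Adj.symm
  rintro ⟨c, hc, c', hc', hcc, ⟨a, ha, hac⟩, ⟨b, hb, hbc⟩, hcB, hcA⟩
  obtain ⟨a', ha', hae'⟩ := heA
  obtain ⟨b', hb', hbe'⟩ := heB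
  have key : G.Adj a d ∧ G.Adj a e ∨ G.Adj b d ∧ G.Adj b e := by
    have hd : G.Adj a d ∨ G.Adj b d := by
      by_contra!
      apply h1.not_path_add_vertex hac hcc hbc.symm (w := d) <;> grind
    have he : G.Adj a e ∨ G.Adj b e := by
      by_contra!
      apply h1.not_path_add_vertex hac hcc hbc.symm (w := e) <;> grind
    by_contra hcon
    rcases hd with had | hbd
    · apply h1.not_path_add_vertex hcc.symm hac.symm had (w := e) <;> grind
    · apply h1.not_path_add_vertex hcc hbc.symm hbd (w := e) <;> grind
  rcases key with ⟨had, hae⟩ | ⟨hbd, hbe⟩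
  · exact not_adj_of_common_neighbor h1 h2 (hAB.notMem_of_mem_left ha) (hnAB a ha) hcB hcc hac
      (hcA a ha) (hCd c hc) (hCe c hc) (hCd c' hc') (hCe c' hc') hde hne had hae hb' hbe'
  · exact not_adj_of_common_neighbor h1 h2 (hAB.notMem_of_mem_right hb)
      (fun x hx h => hnAB x hx b hb h.symm) hcA hcc.symm hbc (hcB b hb) (hCd c' hc') (hCe c' hc')
      (hCd c hc) (hCe c hc) hde hne hbd hbe ha' hae'

/-- In a `K_{2,3}` model with sides `{A, B}` and `{C, D, E}`, some vertex of `C` is attached to both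
`A` and `B`. -/
theorem hasCommonAttachment_of_model (h1 : IndFree P4plusP1 G) (h2 : IndFree (cycleGraph 4) G)
    {A B C D E : Set V} (hC : (G.induce C).Connected) (hD : (G.induce D).Connected)
    (hE : (G.induce E).Connected) (hAB : Disjoint A B) (hDE' : Disjoint D E) (hCD' : Disjoint C D)
    (hnAB : ∀ a ∈ A, ∀ b ∈ B, ¬ G.Adj a b) (hCD : ∀ c ∈ C, ∀ d ∈ D, ¬ G.Adj c d)
    (hCE : ∀ c ∈ C, ∀ e ∈ E, ¬ G.Adj c e) (hDE : ∀ d ∈ D, ∀ e ∈ E, ¬ G.Adj d e)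
    (hCA : ∃ a ∈ A, ∃ c ∈ C, G.Adj a c) (hCB : ∃ b ∈ B, ∃ c ∈ C, G.Adj b c)
    (hEA : ∃ a ∈ A, ∃ e ∈ E, G.Adj a e) (hEB : ∃ b ∈ B, ∃ e ∈ E, G.Adj b e) :
    HasCommonAttachment G A B C := by
  obtain ⟨⟨d, hd⟩⟩ := hD.nonempty
  obtain ⟨⟨e₀, he₀⟩⟩ := hE.nonempty
  obtain ⟨⟨c₀, hc₀⟩⟩ := hC.nonempty
  refine (hasCommonAttachment_or_hasAttachmentEdge h1 h2 hC hAB hnAB hCA hCB (hDE d hd e₀ he₀)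
    (hDE'.ne_of_mem hd he₀) (fun c hc => hCD c hc d hd) (fun c hc => hCE c hc e₀ he₀)).resolve_right
    fun hedge => ?_
  obtain ⟨e, he, heA, heB⟩ | hedge' :=
    hasCommonAttachment_or_hasAttachmentEdge h1 h2 hE hAB hnAB hEA hEB (hCD c₀ hc₀ d hd)
      (hCD'.ne_of_mem hc₀ hd) (fun e he h => hCE c₀ hc₀ e he h.symm)
      (fun e he h => hDE d hd e he h.symm)
  · exact not_hasAttachmentEdge h1 h2 hAB hnAB (hDE d hd e he) (hDE'.ne_of_mem hd he)
      (fun c hc => hCD c hc d hd) (fun c hc => hCE c hc e he) heA heB hedge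
  · exact not_two_hasAttachmentEdge h1 hnAB hCE (fun c hc => hCD c hc d hd)
      (fun e he h => hDE d hd e he h.symm) hedge hedge'

end

/-- Every `{P_4 + P_1, C_4}`-free graph is `K_{2,3}`-induced-minor-free. -/
theorem stmt_17 {V : Type} [Finite V] (G : SimpleGraph V)
    (h1 : IndFree P4plusP1 G) (h2 : IndFree (cycleGraph 4) G) :
    ¬ InducedMinor (completeBipartiteGraph (Fin 2) (Fin 3)) G := by
  rintro ⟨M, -, hconn, hdisj, hadj⟩
  have hnAB : ∀ a ∈ M (.inl 0), ∀ b ∈ M (.inl 1), ¬ G.Adj a b := fun a ha b hb h => by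
    simpa using (hadj (.inl 0) (.inl 1) (by simp)).2 ⟨a, ha, b, hb, h⟩
  have hAB := hdisj (.inl 0) (.inl 1) (by simp)
  have hnot : ∀ i j : Fin 3, i ≠ j → ∀ u ∈ M (.inr i), ∀ v ∈ M (.inr j), ¬ G.Adj u v :=
    fun i j hij u hu v hv h => by
      simpa using (hadj (.inr i) (.inr j) (by simpa using hij)).2 ⟨u, hu, v, hv, h⟩
  have hdisj' : ∀ i j : Fin 3, i ≠ j → Disjoint (M (.inr i)) (M (.inr j)) :=
    fun i j hij => hdisj _ _ (by simpa using hij)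
  have hatt : ∀ (k : Fin 2) (i : Fin 3), ∃ a ∈ M (.inl k), ∃ c ∈ M (.inr i), G.Adj a c :=
    fun k i => (hadj (.inl k) (.inr i) (by simp)).1 (by simp)
  have hcommon : ∀ i j k : Fin 3, i ≠ j → i ≠ k → j ≠ k →
      HasCommonAttachment G (M (.inl 0)) (M (.inl 1)) (M (.inr i)) := fun i j k hij hik hjk =>
    hasCommonAttachment_of_model h1 h2 (hconn _) (hconn (.inr j)) (hconn (.inr k)) hAB
      (hdisj' j k hjk) (hdisj' i j hij) hnAB (hnot i j hij) (hnot i k hik) (hnot j k hjk)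
      (hatt 0 i) (hatt 1 i) (hatt 0 k) (hatt 1 k)
  obtain ⟨c, hc, hcA, hcB⟩ := hcommon 0 1 2 (by decide) (by decide) (by decide)
  obtain ⟨d, hd, hdA, hdB⟩ := hcommon 1 0 2 (by decide) (by decide) (by decide)
  obtain ⟨e, he, heA, heB⟩ := hcommon 2 0 1 (by decide) (by decide) (by decide)
  exact not_three_common_attachments h1 h2 (hconn _) (hconn _) hAB hnAB
    (hnot 0 1 (by decide) c hc d hd) (hnot 0 2 (by decide) c hc e he)
    (hnot 1 2 (by decide) d hd e he) ((hdisj' 0 1 (by decide)).ne_of_mem hc hd)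
    ((hdisj' 0 2 (by decide)).ne_of_mem hc he) ((hdisj' 1 2 (by decide)).ne_of_mem hd he)
    hcA hdA heA hcB hdB heB
end

section
/- If G is a graph that is both (P_4 + P_1)-free and C_4-free, then tree-θ(G) ≤ 3, where tree-θ denotes the tree-clique-cover number; consequently tree-α(G) ≤ 3 as well. -/
open SimpleGraph

/-- The independence number of the subgraph of `G` induced by `s`:
the supremum of sizes of independent sets contained in `s`. -/
noncomputable def setIndepNum {V : Type*} (G : SimpleGraph V) (s : Set V) : ℕ :=
  sSup {n | ∃ t : Finset V, ↑t ⊆ s ∧ (∀ u ∈ t, ∀ v ∈ t, u ≠ v → ¬ G.Adj u v) ∧ t.card = n}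

/-- A tree decomposition of a graph `G`. -/
structure TreeDecomp {V : Type*} (G : SimpleGraph V) where
  ι : Type
  T : SimpleGraph ι
  tree : T.IsTree
  bag : ι → Set V
  bag_vert : ∀ v : V, ∃ i, v ∈ bag i
  bag_edge : ∀ u v : V, G.Adj u v → ∃ i, u ∈ bag i ∧ v ∈ bag i
  bag_conn : ∀ v : V, (T.induce {i | v ∈ bag i}).Connected

/-- The tree-independence number of `G`: the least `n` such that `G` has a tree
decomposition all of whose bags induce subgraphs with independence number at most `n`. -/
noncomputable def treeIndepNum {V : Type*} (G : SimpleGraph V) : ℕ :=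
  sInf {n | ∃ D : TreeDecomp G, ∀ i, setIndepNum G (D.bag i) ≤ n}

/-- The clique cover number of the subgraph of `G` induced by `s`: the least `n` such that
`s` can be partitioned into `n` cliques of `G` (equivalently, there is an assignment of one
of `n` labels to each vertex of `s` such that vertices with equal labels form cliques). -/
noncomputable def setCliqueCoverNum {V : Type*} (G : SimpleGraph V) (s : Set V) : ℕ :=
  sInf {n | ∃ f : s → Fin n, ∀ x y : s, f x = f y → (x : V) = y ∨ G.Adj x y}

/-- The tree-clique-cover number of `G`: the least `n` such that `G` has a tree
decomposition all of whose bags induce subgraphs with clique cover number at most `n`. -/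
noncomputable def treeCliqueCoverNum {V : Type*} (G : SimpleGraph V) : ℕ :=
  sInf {n | ∃ D : TreeDecomp G, ∀ i, setCliqueCoverNum G (D.bag i) ≤ n}

namespace SimpleGraph

/-- A walk in a disjoint sum that starts on the left is the image of a walk on the left. -/
theorem exists_walk_map_sumInl {α β : Type*} {A : SimpleGraph α} {B : SimpleGraph β}
    {x y : α ⊕ β} (p : (A ⊕g B).Walk x y) :
    ∀ a, (ha : x = Sum.inl a) → ∃ b, ∃ hb : y = Sum.inl b, ∃ q : A.Walk a b,
      p = (q.map (Embedding.sumInl (H := B)).toHom).copy ha.symm hb.symm := by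
  induction p with
  | nil => rintro a rfl; exact ⟨a, rfl, .nil, rfl⟩
  | @cons x z y h p ih =>
    rintro a rfl
    cases z with
    | inr z => simp at h
    | inl z =>
      obtain ⟨b, rfl, q, rfl⟩ := ih z rfl
      exact ⟨b, rfl, .cons (by simpa using h) q, rfl⟩

theorem not_isCycle_of_sumInl {α β : Type*} {A : SimpleGraph α} {B : SimpleGraph β}
    (hA : A.IsAcyclic) {a : α} (c : (A ⊕g B).Walk (Sum.inl a) (Sum.inl a)) : ¬ c.IsCycle := by
  intro hc
  obtain ⟨b, hb, q, rfl⟩ := exists_walk_map_sumInl c a rfl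
  obtain rfl : a = b := by simpa using hb
  exact hA q ((Walk.isCycle_map_iff_of_injective Sum.inl_injective).1 hc)

/-- A disjoint sum of acyclic graphs is acyclic. -/
theorem IsAcyclic.sum {α β : Type*} {A : SimpleGraph α} {B : SimpleGraph β}
    (hA : A.IsAcyclic) (hB : B.IsAcyclic) : (A ⊕g B).IsAcyclic := by
  rintro (a | b) c hc
  · exact not_isCycle_of_sumInl hA c hc
  · exact not_isCycle_of_sumInl hB (c.map (Iso.sumComm (G := A) (H := B)).toHom)
      (hc.map Iso.sumComm.injective)

/-- Joining two trees by an edge yields a tree. -/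
theorem IsTree.sum_sup_edge {α β : Type*} {A : SimpleGraph α} {B : SimpleGraph β}
    (hA : A.IsTree) (hB : B.IsTree) (a : α) (b : β) :
    ((A ⊕g B) ⊔ edge (Sum.inl a) (Sum.inr b)).IsTree := by
  refine ⟨hA.connected.sum_sup_edge hB.connected, .sup_edge_of_not_reachable
    (not_reachable_sum_inl_inr a b) (hA.isAcyclic.sum hB.isAcyclic)⟩

variable {V : Type*} (G : SimpleGraph V)

/-- The set `B` is covered by three cliques of `G`. -/
def CoveredByThree (B : Set V) : Prop :=
  ∃ P Q R : Set V, G.IsClique P ∧ G.IsClique Q ∧ G.IsClique R ∧ B ⊆ P ∪ Q ∪ R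

/-- The subgraph induced by `S` has a tree decomposition in which each bag is covered by three
cliques, each clique lies in a bag, and `Y` lies in a bag. -/
def Decomposable (S Y : Set V) : Prop :=
  ∃ (ι : Type) (T : SimpleGraph ι) (bag : ι → Set V), T.IsTree ∧
    (∀ i, bag i ⊆ S ∧ G.CoveredByThree (bag i)) ∧
    (∀ v ∈ S, (T.induce {i | v ∈ bag i}).Connected) ∧
    (∀ C ⊆ S, G.IsClique C → ∃ i, C ⊆ bag i) ∧ ∃ i, Y ⊆ bag i

variable {G}

theorem CoveredByThree.decomposable {B : Set V} (h : G.CoveredByThree B) :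
    G.Decomposable B B := by
  refine ⟨Unit, ⊥, fun _ ↦ B, .of_subsingleton, fun _ ↦ ⟨le_rfl, h⟩, fun v hv ↦ ?_,
    fun C hC _ ↦ ⟨(), hC⟩, (), le_rfl⟩
  have : Nonempty {i : Unit | v ∈ B} := ⟨⟨(), hv⟩⟩
  exact (IsTree.of_subsingleton).connected

theorem Decomposable.of_isClique {S Y C : Set V} (h : G.Decomposable S Y) (hC : G.IsClique C)
    (hCS : C ⊆ S) : G.Decomposable S C := by
  obtain ⟨ι, T, bag, hT, hbag, hconn, hcl, -⟩ := h
  exact ⟨ι, T, bag, hT, hbag, hconn, hcl, hcl C hCS hC⟩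

/-- Two tree decompositions can be glued along a common subset of two bags. -/
theorem Decomposable.glue {S₁ S₂ Y₁ Y₂ : Set V} (h₁ : G.Decomposable S₁ Y₁)
    (h₂ : G.Decomposable S₂ Y₂) (hY₁ : S₁ ∩ S₂ ⊆ Y₁) (hY₂ : S₁ ∩ S₂ ⊆ Y₂)
    (hadj : ∀ u ∈ S₁, ∀ v ∈ S₂, G.Adj u v → u ∈ S₂ ∨ v ∈ S₁) :
    G.Decomposable (S₁ ∪ S₂) Y₂ := by
  obtain ⟨ι, T, b, hT, hb, hbc, hbcl, i, hi⟩ := h₁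
  obtain ⟨κ, U, c, hU, hc, hcc, hccl, j, hj⟩ := h₂
  refine ⟨ι ⊕ κ, (T ⊕g U) ⊔ edge (Sum.inl i) (Sum.inr j), Sum.elim b c, hT.sum_sup_edge hU i j,
    ?_, ?_, ?_, Sum.inr j, hj⟩
  · rintro (k | k)
    · exact ⟨(hb k).1.trans Set.subset_union_left, (hb k).2⟩
    · exact ⟨(hc k).1.trans Set.subset_union_right, (hc k).2⟩
  · intro v hv
    set J := (T ⊕g U) ⊔ edge (Sum.inl i) (Sum.inr j)
    set X : Set (ι ⊕ κ) := {k | v ∈ Sum.elim b c k}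
    let f : T.induce {k | v ∈ b k} →g J.induce X :=
      ⟨fun k ↦ ⟨Sum.inl k.1, k.2⟩, fun {k l} h ↦ by
        simp only [comap_adj, Function.Embedding.subtype_apply] at h ⊢
        exact Or.inl (by simpa using h)⟩
    let g : U.induce {k | v ∈ c k} →g J.induce X :=
      ⟨fun k ↦ ⟨Sum.inr k.1, k.2⟩, fun {k l} h ↦ by
        simp only [comap_adj, Function.Embedding.subtype_apply] at h ⊢
        exact Or.inl (by simpa using h)⟩
    rw [connected_iff_exists_forall_reachable]
    by_cases h1 : v ∈ S₁
    · by_cases h2 : v ∈ S₂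
      · have hvi : v ∈ b i := hi (hY₁ ⟨h1, h2⟩)
        have hvj : v ∈ c j := hj (hY₂ ⟨h1, h2⟩)
        refine ⟨f ⟨i, hvi⟩, ?_⟩
        rintro ⟨k | k, hk⟩
        · exact ((hbc v h1).preconnected ⟨i, hvi⟩ ⟨k, hk⟩).map f
        · have hij : (J.induce X).Adj (f ⟨i, hvi⟩) (g ⟨j, hvj⟩) := by
            simp [J, f, g, edge_adj]
          exact hij.reachable.trans (((hcc v h2).preconnected ⟨j, hvj⟩ ⟨k, hk⟩).map g)
      · obtain ⟨k₀⟩ := (hbc v h1).nonempty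
        refine ⟨f k₀, ?_⟩
        rintro ⟨k | k, hk⟩
        · exact ((hbc v h1).preconnected k₀ ⟨k, hk⟩).map f
        · exact absurd ((hc k).1 hk) h2
    · have h2 : v ∈ S₂ := hv.resolve_left h1
      obtain ⟨k₀⟩ := (hcc v h2).nonempty
      refine ⟨g k₀, ?_⟩
      rintro ⟨k | k, hk⟩
      · exact absurd ((hb k).1 hk) h1
      · exact ((hcc v h2).preconnected k₀ ⟨k, hk⟩).map g
  · intro C hC hcl
    by_cases h1 : C ⊆ S₁
    · obtain ⟨k, hk⟩ := hbcl C h1 hcl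
      exact ⟨Sum.inl k, hk⟩
    · obtain ⟨x, hx, hx1⟩ := Set.not_subset.1 h1
      have h2 : C ⊆ S₂ := by
        intro y hy
        by_contra hy2
        have hyx : y ≠ x := by
          rintro rfl
          exact (hC hy).elim hx1 hy2
        rcases hadj y ((hC hy).resolve_right hy2) x ((hC hx).resolve_left hx1)
          (hcl hy hx hyx) with h | h
        · exact hy2 h
        · exact hx1 h
      obtain ⟨k, hk⟩ := hccl C h2 hcl
      exact ⟨Sum.inr k, hk⟩

/-- A graph whose vertex set is `Decomposable` has tree-clique-cover number and
tree-independence number at most three. -/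
theorem Decomposable.treeNum_le_three {V : Type} {G : SimpleGraph V} {Y : Set V}
    (h : G.Decomposable Set.univ Y) : treeCliqueCoverNum G ≤ 3 ∧ treeIndepNum G ≤ 3 := by
  obtain ⟨ι, T, bag, hT, hbag, hconn, hcl, -⟩ := h
  let D : TreeDecomp G :=
    { ι := ι, T := T, tree := hT, bag := bag
      bag_vert := fun v ↦ (hcl {v} (Set.subset_univ _) (by simp)).imp fun i hi ↦ by simpa using hi
      bag_edge := fun u v huv ↦
        (hcl {u, v} (Set.subset_univ _) (by simp [huv])).imp fun i hi ↦
          ⟨hi (by simp), hi (by simp)⟩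
      bag_conn := fun v ↦ hconn v (Set.mem_univ v) }
  have hf : ∀ i, ∃ f : D.bag i → Fin 3, ∀ x y : D.bag i, f x = f y → (x : V) = y ∨ G.Adj x y := by
    classical
    intro i
    obtain ⟨P, Q, R, hP, hQ, hR, hsub⟩ := (hbag i).2
    refine ⟨fun x ↦ if (x : V) ∈ P then 0 else if (x : V) ∈ Q then 1 else 2, fun x y hxy ↦ ?_⟩
    have hx := hsub x.2
    have hy := hsub y.2
    simp only [Set.mem_union] at hx hy
    by_contra! hne
    have h1 := fun a b ↦ hne.2 (hP (x := x) a (y := y) b hne.1)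
    have h2 := fun a b ↦ hne.2 (hQ (x := x) a (y := y) b hne.1)
    have h3 := fun a b ↦ hne.2 (hR (x := x) a (y := y) b hne.1)
    dsimp only at hxy
    split_ifs at hxy <;> simp_all
  refine ⟨Nat.sInf_le ⟨D, fun i ↦ Nat.sInf_le (hf i)⟩, Nat.sInf_le ⟨D, fun i ↦ ?_⟩⟩
  obtain ⟨f, hf⟩ := hf i
  refine csSup_le' ?_
  rintro n ⟨t, hts, hind, rfl⟩
  have : Function.Injective fun x : t ↦ f ⟨x, hts x.2⟩ := by
    intro x y hxy
    by_contra hne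
    have hne' : (x : V) ≠ y := fun h ↦ hne (Subtype.ext h)
    exact hind x x.2 y y.2 hne' ((hf _ _ hxy).resolve_left hne')
  simpa using Fintype.card_le_of_injective _ this

end SimpleGraph

namespace SimpleGraph

variable {V : Type*} {G : SimpleGraph V}

variable (G) in
/-- `G` has no induced cycle on four vertices. -/
def SquareFree : Prop :=
  ∀ a b c d, G.Adj a b → G.Adj b c → G.Adj c d → G.Adj d a →
    a = c ∨ b = d ∨ G.Adj a c ∨ G.Adj b d

variable (G) in
/-- Each vertex outside an induced path on four vertices has a neighbor on it. -/
def PathDominated : Prop :=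
  ∀ a b c d e, G.Adj a b → G.Adj b c → G.Adj c d → ¬ G.Adj a c → ¬ G.Adj a d → ¬ G.Adj b d →
    G.Adj e a ∨ G.Adj e b ∨ G.Adj e c ∨ G.Adj e d

theorem squareFree_of_indFree (h : IndFree (cycleGraph 4) G) : G.SquareFree := by
  intro a b c d hab hbc hcd hda
  by_contra! hno
  have hadj : ∀ i j, G.Adj (![a, b, c, d] i) (![a, b, c, d] j) ↔ (cycleGraph 4).Adj i j := by
    have hC : ∀ i j : Fin 4, (cycleGraph 4).Adj i j ↔ j = i + 1 ∨ i = j + 1 := by decide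
    intro i j
    rw [hC]
    fin_cases i <;> fin_cases j <;> simp <;> grind [Adj.symm, SimpleGraph.irrefl]
  refine h.false ⟨⟨![a, b, c, d], ?_⟩, hadj _ _⟩
  intro i j hij
  fin_cases i <;> fin_cases j <;> simp at hij ⊢ <;> grind [Adj.symm, SimpleGraph.irrefl]

theorem pathDominated_of_indFree (h : IndFree P4plusP1 G) : G.PathDominated := by
  intro a b c d e hab hbc hcd hac had hbd
  by_contra! hno
  have hadj : ∀ i j, G.Adj (Sum.elim ![a, b, c, d] ![e] i) (Sum.elim ![a, b, c, d] ![e] j) ↔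
      P4plusP1.Adj i j := by
    rintro (i | i) (j | j) <;> fin_cases i <;> fin_cases j <;>
      simp [P4plusP1, pathGraph_adj] <;> grind [Adj.symm, SimpleGraph.irrefl]
  refine h.false ⟨⟨Sum.elim ![a, b, c, d] ![e], ?_⟩, hadj _ _⟩
  rintro (i | i) (j | j) hij <;> fin_cases i <;> fin_cases j <;> simp at hij ⊢ <;>
    grind [Adj.symm, SimpleGraph.irrefl]

/-! ### Components and clique cutsets -/

/-- The vertices reachable from `x` inside `W`. -/
def componentIn (G : SimpleGraph V) (W : Set V) (x : V) : Set V :=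
  {z | Relation.ReflTransGen (fun u v ↦ G.Adj u v ∧ u ∈ W ∧ v ∈ W) x z}

theorem mem_componentIn_self (W : Set V) (x : V) : x ∈ G.componentIn W x := .refl

theorem componentIn_subset {W : Set V} {x : V} (hx : x ∈ W) : G.componentIn W x ⊆ W := by
  intro z hz
  induction hz with
  | refl => exact hx
  | tail _ h _ => exact h.2.2

theorem mem_componentIn_of_adj {W : Set V} {x u v : V} (hx : x ∈ W)
    (hu : u ∈ G.componentIn W x) (huv : G.Adj u v) (hv : v ∈ W) : v ∈ G.componentIn W x :=
  Relation.ReflTransGen.tail hu ⟨huv, componentIn_subset hx hu, hv⟩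

theorem componentIn_eq {W : Set V} {x p : V} (hp : p ∈ G.componentIn W x) :
    G.componentIn W x = G.componentIn W p := by
  have : Std.Symm fun u v ↦ G.Adj u v ∧ u ∈ W ∧ v ∈ W :=
    ⟨fun u v h ↦ ⟨h.1.symm, h.2.2, h.2.1⟩⟩
  have hx : x ∈ G.componentIn W p := Relation.ReflTransGen.stdSymm.symm _ _ hp
  ext z
  exact ⟨hx.trans, hp.trans⟩

/-- Vertices of a component without induced paths on four vertices have distance at most two. -/
theorem componentIn_dist_le_two (hP : G.PathDominated) {W : Set V} {x y p q : V} (hx : x ∈ W)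
    (hy : ∀ w ∈ W, ¬ G.Adj y w) (hp : p ∈ G.componentIn W x) (hq : q ∈ G.componentIn W x) :
    p = q ∨ G.Adj p q ∨ ∃ w ∈ G.componentIn W x, G.Adj p w ∧ G.Adj w q := by
  have hpW := componentIn_subset hx hp
  rw [componentIn_eq hp] at hq ⊢
  induction hq with
  | refl => exact .inl rfl
  | @tail q r hq hqr ih =>
    obtain ⟨hqr, hqW, hrW⟩ := hqr
    rcases ih with rfl | h | ⟨w, hw, hpw, hwq⟩
    · exact .inr (.inl hqr)
    · exact .inr (.inr ⟨q, hq, h, hqr⟩)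
    · have hwW := componentIn_subset hpW hw
      have := hP p w q r y hpw hwq hqr
      have h1 := hy _ hpW
      have h2 := hy _ hwW
      have h3 := hy _ hqW
      have h4 := hy _ hrW
      by_cases hpq : G.Adj p q
      · exact .inr (.inr ⟨q, hq, hpq, hqr⟩)
      by_cases hwr : G.Adj w r
      · exact .inr (.inr ⟨w, hw, hpw, hwr⟩)
      by_cases hpr : G.Adj p r
      · exact .inr (.inl hpr)
      tauto

/-- A clique cutset reduces decomposability to smaller sets. -/
theorem decomposable_of_clique_cutset {S K N : Set V} {x z : V}
    (ih : ∀ S' ⊂ S, G.Decomposable S' ∅) (hKS : K ⊆ S) (hNS : N ⊆ S) (hN : G.IsClique N)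
    (hx : x ∈ K) (hzS : z ∈ S) (hzK : z ∉ K) (hzN : z ∉ N)
    (hadj : ∀ u ∈ K, ∀ v ∈ S, G.Adj u v → v ∈ K ∨ v ∈ N) : G.Decomposable S ∅ := by
  have h1 : G.Decomposable (S \ K) (N \ K) :=
    (ih _ ⟨Set.sdiff_subset, fun h ↦ (h (hKS hx)).2 hx⟩).of_isClique
      (hN.subset Set.sdiff_subset) (Set.sdiff_subset_sdiff_left hNS)
  have h2 : G.Decomposable (K ∪ N) N :=
    (ih _ ⟨Set.union_subset hKS hNS, fun h ↦ (h hzS).elim hzK hzN⟩).of_isClique hN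
      Set.subset_union_right
  have h := h1.glue h2 (by grind) (by grind) (by grind [Adj.symm])
  have hS : S \ K ∪ (K ∪ N) = S := by grind
  rw [hS] at h
  exact h.of_isClique (by simp) (Set.empty_subset _)

/-! ### Induced cycles on five vertices -/

variable (G) in
/-- The vertices `c₁, …, c₅` form an induced cycle in this order. -/
structure Pentagon (c₁ c₂ c₃ c₄ c₅ : V) : Prop where
  adj₁₂ : G.Adj c₁ c₂
  adj₂₃ : G.Adj c₂ c₃
  adj₃₄ : G.Adj c₃ c₄
  adj₄₅ : G.Adj c₄ c₅
  adj₅₁ : G.Adj c₅ c₁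
  not_adj₁₃ : ¬ G.Adj c₁ c₃
  not_adj₂₄ : ¬ G.Adj c₂ c₄
  not_adj₃₅ : ¬ G.Adj c₃ c₅
  not_adj₄₁ : ¬ G.Adj c₄ c₁
  not_adj₅₂ : ¬ G.Adj c₅ c₂

variable (G) in
/-- The vertices adjacent to both ends of a path `a, b, c, d` but to neither interior vertex. If
the path is part of an induced pentagon, these are the twins of the fifth vertex. -/
def twins (a b c d : V) : Set V :=
  {v | G.Adj v a ∧ ¬ G.Adj v b ∧ ¬ G.Adj v c ∧ G.Adj v d}

variable (G) in
/-- The vertices adjacent to all of `c₁, …, c₅`. -/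
def hubs (c₁ c₂ c₃ c₄ c₅ : V) : Set V :=
  {v | G.Adj v c₁ ∧ G.Adj v c₂ ∧ G.Adj v c₃ ∧ G.Adj v c₄ ∧ G.Adj v c₅}

variable (G) in
/-- The vertices adjacent to `c₁` and `c₂` but to none of `c₃, c₄, c₅`. -/
def ears (c₁ c₂ c₃ c₄ c₅ : V) : Set V :=
  {v | G.Adj v c₁ ∧ G.Adj v c₂ ∧ ¬ G.Adj v c₃ ∧ ¬ G.Adj v c₄ ∧ ¬ G.Adj v c₅}

theorem mem_twins {a b c d v : V} :
    v ∈ G.twins a b c d ↔ G.Adj v a ∧ ¬ G.Adj v b ∧ ¬ G.Adj v c ∧ G.Adj v d := Iff.rfl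

theorem mem_hubs {c₁ c₂ c₃ c₄ c₅ v : V} : v ∈ G.hubs c₁ c₂ c₃ c₄ c₅ ↔
    G.Adj v c₁ ∧ G.Adj v c₂ ∧ G.Adj v c₃ ∧ G.Adj v c₄ ∧ G.Adj v c₅ := Iff.rfl

theorem mem_ears {c₁ c₂ c₃ c₄ c₅ v : V} : v ∈ G.ears c₁ c₂ c₃ c₄ c₅ ↔
    G.Adj v c₁ ∧ G.Adj v c₂ ∧ ¬ G.Adj v c₃ ∧ ¬ G.Adj v c₄ ∧ ¬ G.Adj v c₅ := Iff.rfl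

namespace Pentagon

variable {c₁ c₂ c₃ c₄ c₅ : V}

theorem rotate (hc : G.Pentagon c₁ c₂ c₃ c₄ c₅) : G.Pentagon c₂ c₃ c₄ c₅ c₁ :=
  ⟨hc.2, hc.3, hc.4, hc.5, hc.1, hc.7, hc.8, hc.9, hc.10, hc.6⟩

theorem reflect (hc : G.Pentagon c₁ c₂ c₃ c₄ c₅) : G.Pentagon c₂ c₁ c₅ c₄ c₃ := by
  cases hc
  constructor <;> simp_all [G.adj_comm]

theorem ears_reflect : G.ears c₂ c₁ c₅ c₄ c₃ = G.ears c₁ c₂ c₃ c₄ c₅ := by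
  ext v
  simp only [mem_ears]
  tauto

theorem twins_reflect (a b c d : V) : G.twins d c b a = G.twins a b c d := by
  ext v
  simp only [mem_twins]
  tauto

/-- Every vertex is a hub, a twin or an ear. -/
theorem classification (hS : G.SquareFree) (hP : G.PathDominated)
    (hc : G.Pentagon c₁ c₂ c₃ c₄ c₅) (v : V) :
    v ∈ G.hubs c₁ c₂ c₃ c₄ c₅ ∨ v ∈ G.twins c₂ c₃ c₄ c₅ ∨ v ∈ G.twins c₃ c₄ c₅ c₁ ∨
    v ∈ G.twins c₄ c₅ c₁ c₂ ∨ v ∈ G.twins c₅ c₁ c₂ c₃ ∨ v ∈ G.twins c₁ c₂ c₃ c₄ ∨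
    v ∈ G.ears c₁ c₂ c₃ c₄ c₅ ∨ v ∈ G.ears c₂ c₃ c₄ c₅ c₁ ∨ v ∈ G.ears c₃ c₄ c₅ c₁ c₂ ∨
    v ∈ G.ears c₄ c₅ c₁ c₂ c₃ ∨ v ∈ G.ears c₅ c₁ c₂ c₃ c₄ := by
  have key : ∀ {c₁ c₂ c₃ c₄ c₅}, G.Pentagon c₁ c₂ c₃ c₄ c₅ →
      (G.Adj v c₁ → G.Adj v c₃ → ¬ G.Adj v c₂ → v = c₂) ∧
      (G.Adj v c₁ ∨ G.Adj v c₂ ∨ G.Adj v c₃ ∨ G.Adj v c₄) := by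
    intro c₁ c₂ c₃ c₄ c₅ hc
    refine ⟨fun h1 h3 h2 ↦ ?_, hP c₁ c₂ c₃ c₄ v hc.1 hc.2 hc.3 hc.6 (mt Adj.symm hc.9) hc.7⟩
    have := hS v c₁ c₂ c₃
    cases hc
    grind [adj_comm]
  have k1 := key hc
  have k2 := key hc.rotate
  have k3 := key hc.rotate.rotate
  have k4 := key hc.rotate.rotate.rotate
  have k5 := key hc.rotate.rotate.rotate.rotate
  cases hc
  grind [mem_hubs, mem_twins, mem_ears, adj_comm]

theorem mem_twins_self (hc : G.Pentagon c₁ c₂ c₃ c₄ c₅) : c₁ ∈ G.twins c₂ c₃ c₄ c₅ := by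
  cases hc
  grind [mem_twins, adj_comm]

theorem isClique_twins (hS : G.SquareFree) (hc : G.Pentagon c₁ c₂ c₃ c₄ c₅) :
    G.IsClique (G.twins c₂ c₃ c₄ c₅) := by
  intro u hu v hv huv
  have := hS u c₂ v c₅
  have := hc.adj₂₃
  have := hc.not_adj₃₅
  have := hc.not_adj₅₂
  grind [mem_twins, adj_comm]

theorem isClique_hubs (hS : G.SquareFree) (hc : G.Pentagon c₁ c₂ c₃ c₄ c₅) :
    G.IsClique (G.hubs c₁ c₂ c₃ c₄ c₅) := by
  intro u hu v hv huv
  have := hS u c₁ v c₃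
  cases hc
  grind [mem_hubs, adj_comm]

theorem adj_hub_twin (hS : G.SquareFree) (hc : G.Pentagon c₁ c₂ c₃ c₄ c₅) {u v : V}
    (hu : u ∈ G.hubs c₁ c₂ c₃ c₄ c₅) (hv : v ∈ G.twins c₂ c₃ c₄ c₅) : G.Adj u v := by
  have := hS u c₂ v c₅
  cases hc
  grind [mem_hubs, mem_twins, adj_comm]

theorem not_adj_twin_twin (hS : G.SquareFree) (hc : G.Pentagon c₁ c₂ c₃ c₄ c₅) {u v : V}
    (hu : u ∈ G.twins c₂ c₃ c₄ c₅) (hv : v ∈ G.twins c₄ c₅ c₁ c₂) : ¬ G.Adj u v := by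
  intro huv
  have := hS u v c₄ c₅
  cases hc
  grind [mem_twins, adj_comm]

theorem adj_ear_ear (hP : G.PathDominated) (hc : G.Pentagon c₁ c₂ c₃ c₄ c₅) {u v : V}
    (hu : u ∈ G.ears c₁ c₂ c₃ c₄ c₅) (hv : v ∈ G.ears c₂ c₃ c₄ c₅ c₁) : G.Adj u v := by
  have := hP u c₁ c₅ c₄ v
  cases hc
  grind [mem_ears, adj_comm]

theorem not_ear_ear (hS : G.SquareFree) (hP : G.PathDominated) (hc : G.Pentagon c₁ c₂ c₃ c₄ c₅)
    {u v : V} (hu : u ∈ G.ears c₁ c₂ c₃ c₄ c₅) (hv : v ∈ G.ears c₃ c₄ c₅ c₁ c₂) : False := by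
  have := hP u c₂ c₃ v c₅
  have := hS u v c₃ c₂
  cases hc
  grind [mem_ears, adj_comm]

theorem adj_ear_twin (hP : G.PathDominated) (hc : G.Pentagon c₁ c₂ c₃ c₄ c₅) {a q : V}
    (ha : a ∈ G.ears c₁ c₂ c₃ c₄ c₅) (hq : q ∈ G.twins c₂ c₃ c₄ c₅) : G.Adj a q := by
  have := hP c₃ c₄ c₅ q a
  cases hc
  grind [mem_ears, mem_twins, adj_comm]

theorem adj_ear_twin' (hP : G.PathDominated) (hc : G.Pentagon c₁ c₂ c₃ c₄ c₅) {a q : V}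
    (ha : a ∈ G.ears c₁ c₂ c₃ c₄ c₅) (hq : q ∈ G.twins c₃ c₄ c₅ c₁) : G.Adj a q :=
  hc.reflect.adj_ear_twin hP (ears_reflect ▸ ha) (twins_reflect _ _ _ _ ▸ hq)

theorem not_adj_ear_twin (hS : G.SquareFree) (hc : G.Pentagon c₁ c₂ c₃ c₄ c₅) {a q : V}
    (ha : a ∈ G.ears c₁ c₂ c₃ c₄ c₅) (hq : q ∈ G.twins c₅ c₁ c₂ c₃) : ¬ G.Adj a q := by
  have := hS q a c₁ c₅
  cases hc
  grind [mem_ears, mem_twins, adj_comm]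

theorem adj_twin_of_adj_ear (hS : G.SquareFree) (hP : G.PathDominated)
    (hc : G.Pentagon c₁ c₂ c₃ c₄ c₅) {a q r : V} (ha : a ∈ G.ears c₁ c₂ c₃ c₄ c₅)
    (hq : q ∈ G.twins c₄ c₅ c₁ c₂) (haq : G.Adj a q) (hr : r ∈ G.twins c₃ c₄ c₅ c₁) :
    G.Adj r q := by
  have h1 := hc.rotate.rotate.isClique_twins hS hc.rotate.rotate.mem_twins_self hq
  have h2 := hc.adj_ear_twin' hP ha hr
  have := hS r c₃ q a
  cases hc
  grind [mem_ears, mem_twins, adj_comm]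

theorem adj_twin_of_adj_ear' (hS : G.SquareFree) (hP : G.PathDominated)
    (hc : G.Pentagon c₁ c₂ c₃ c₄ c₅) {a q r : V} (ha : a ∈ G.ears c₁ c₂ c₃ c₄ c₅)
    (hq : q ∈ G.twins c₁ c₂ c₃ c₄) (haq : G.Adj a q) (hr : r ∈ G.twins c₂ c₃ c₄ c₅) :
    G.Adj r q :=
  hc.reflect.adj_twin_of_adj_ear hS hP (ears_reflect ▸ ha) (twins_reflect _ _ _ _ ▸ hq) haq
    (twins_reflect _ _ _ _ ▸ hr)

theorem adj_ear_of_adj_ear (hS : G.SquareFree) (hP : G.PathDominated)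
    (hc : G.Pentagon c₁ c₂ c₃ c₄ c₅) {a b q : V} (ha : a ∈ G.ears c₁ c₂ c₃ c₄ c₅)
    (hb : b ∈ G.ears c₁ c₂ c₃ c₄ c₅) (hab : G.Adj a b) (hq : q ∈ G.twins c₄ c₅ c₁ c₂)
    (haq : G.Adj a q) : G.Adj b q := by
  have := hc.rotate.rotate.isClique_twins hS hc.rotate.rotate.mem_twins_self hq
  have := hP b a q c₃ c₅
  cases hc
  grind [mem_ears, mem_twins, adj_comm]

theorem adj_ear_of_adj_ear' (hS : G.SquareFree) (hP : G.PathDominated)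
    (hc : G.Pentagon c₁ c₂ c₃ c₄ c₅) {a b q : V} (ha : a ∈ G.ears c₁ c₂ c₃ c₄ c₅)
    (hb : b ∈ G.ears c₁ c₂ c₃ c₄ c₅) (hab : G.Adj a b) (hq : q ∈ G.twins c₁ c₂ c₃ c₄)
    (haq : G.Adj a q) : G.Adj b q :=
  hc.reflect.adj_ear_of_adj_ear hS hP (ears_reflect ▸ ha) (ears_reflect ▸ hb) hab
    (twins_reflect _ _ _ _ ▸ hq) haq

end Pentagon

theorem IsClique.union {A B : Set V} (hA : G.IsClique A) (hB : G.IsClique B)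
    (hAB : ∀ a ∈ A, ∀ b ∈ B, a = b ∨ G.Adj a b) : G.IsClique (A ∪ B) := by
  rintro a (ha | ha) b (hb | hb) hab
  · exact hA ha hb hab
  · exact (hAB a ha b hb).resolve_left hab
  · exact ((hAB b hb a ha).resolve_left hab.symm).symm
  · exact hB ha hb hab

variable (G) in
/-- The sets `A` and `B` are disjoint and no edge joins them. -/
def Separated (A B : Set V) : Prop :=
  ∀ a ∈ A, ∀ b ∈ B, a ≠ b ∧ ¬ G.Adj a b

/-- Decomposition of a cyclic arrangement of five cliques with two attached cliques `A₁, A₂`. -/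
theorem decomposable_of_five_cliques {S A₁ A₂ Q₁ Q₂ Q₃ Q₄ Q₅ X₄ X₅ U : Set V}
    (hS : ∀ v ∈ S, v ∈ A₁ ∨ v ∈ A₂ ∨ v ∈ Q₁ ∨ v ∈ Q₂ ∨ v ∈ Q₃ ∨ v ∈ Q₄ ∨ v ∈ Q₅ ∨ v ∈ U)
    (hX₄ : X₄ ⊆ Q₄) (hX₅ : X₅ ⊆ Q₅)
    (hl : G.IsClique (A₁ ∪ Q₁ ∪ X₅)) (hr : G.IsClique (A₂ ∪ Q₃ ∪ X₄))
    (h₂ : G.IsClique (Q₂ ∪ U)) (h₄ : G.IsClique (Q₄ ∪ U)) (h₅ : G.IsClique Q₅)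
    (hA₁₄ : G.Separated A₁ Q₄) (hA₁₅ : G.Separated A₁ (Q₅ \ X₅))
    (hA₂₄ : G.Separated A₂ (Q₄ \ X₄)) (hA₂₅ : G.Separated A₂ Q₅)
    (h₂₄ : G.Separated Q₂ Q₄) (h₂₅ : G.Separated Q₂ Q₅) (h₃₅ : G.Separated Q₃ Q₅) :
    G.Decomposable S ∅ := by
  simp only [Separated, Set.mem_sdiff, and_imp] at hA₁₄ hA₁₅ hA₂₄ hA₂₅ h₂₄ h₂₅ h₃₅
  have d₁ : G.CoveredByThree (S ∩ (A₁ ∪ A₂ ∪ Q₁ ∪ Q₂ ∪ Q₃ ∪ X₄ ∪ X₅ ∪ U)) :=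
    ⟨_, _, _, hl, hr, h₂, by grind⟩
  have d₂ : G.CoveredByThree (S ∩ (Q₁ ∪ X₅ ∪ Q₃ ∪ Q₄ ∪ U)) := ⟨_, _, _, hl, hr, h₄, by grind⟩
  have d₃ : G.CoveredByThree (S ∩ (Q₁ ∪ Q₄ ∪ Q₅ ∪ U)) := ⟨_, _, _, hl, h₅, h₄, by grind⟩
  have e₂ := d₃.decomposable.glue d₂.decomposable (by grind) (by grind)
    (by grind [Separated, adj_comm])
  have hI : (S ∩ (Q₁ ∪ Q₄ ∪ Q₅ ∪ U) ∪ S ∩ (Q₁ ∪ X₅ ∪ Q₃ ∪ Q₄ ∪ U)) ∩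
      (S ∩ (A₁ ∪ A₂ ∪ Q₁ ∪ Q₂ ∪ Q₃ ∪ X₄ ∪ X₅ ∪ U)) ⊆ S ∩ (Q₁ ∪ X₅ ∪ Q₃ ∪ Q₄ ∪ U) := by
    rintro v ⟨⟨hv, ((h | h) | h) | h⟩ | h, -, h'⟩
    · simp [hv, h]
    · simp [hv, h]
    · have h₁ := fun h₁ h₂ ↦ (hA₁₅ v h₁ v h h₂).1 rfl
      have h₂ := fun h₁ ↦ (hA₂₅ v h₁ v h).1 rfl
      have h₃ := fun h₁ ↦ (h₂₅ v h₁ v h).1 rfl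
      have h₄ := @hX₄ v
      simp only [Set.mem_union, Set.mem_inter_iff] at h' ⊢
      clear * - hv h' h₁ h₂ h₃ h₄
      tauto
    · simp [hv, h]
    · exact h
  have e₁ := e₂.glue d₁.decomposable hI (by grind) (by grind [adj_comm])
  have h := e₁.of_isClique (C := ∅) (by simp) (Set.empty_subset _)
  convert h using 1
  refine Set.Subset.antisymm (fun v hv ↦ ?_) ?_
  · rcases hS v hv with h | h | h | h | h | h | h | h <;> simp [hv, h]
  · rintro v ((h | h) | h) <;> exact h.1

/-- Decomposition of a cyclic arrangement of six cliques. -/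
theorem decomposable_of_six_cliques {S Q₁ Q₂ Q₃ Q₄ Q₅ Q₆ U : Set V}
    (hS : ∀ v ∈ S, v ∈ Q₁ ∨ v ∈ Q₂ ∨ v ∈ Q₃ ∨ v ∈ Q₄ ∨ v ∈ Q₅ ∨ v ∈ Q₆ ∨ v ∈ U)
    (h₁ : G.IsClique (Q₁ ∪ U)) (h₂ : G.IsClique Q₂) (h₃ : G.IsClique Q₃) (h₄ : G.IsClique Q₄)
    (h₅ : G.IsClique Q₅) (h₆ : G.IsClique Q₆)
    (h₂₄ : G.Separated Q₂ Q₄) (h₂₅ : G.Separated Q₂ Q₅) (h₂₆ : G.Separated Q₂ Q₆)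
    (h₃₅ : G.Separated Q₃ Q₅) (h₃₆ : G.Separated Q₃ Q₆) (h₄₆ : G.Separated Q₄ Q₆) :
    G.Decomposable S ∅ := by
  have d₁ : G.CoveredByThree (S ∩ (Q₁ ∪ Q₂ ∪ Q₃ ∪ U)) := ⟨_, _, _, h₁, h₂, h₃, by grind⟩
  have d₂ : G.CoveredByThree (S ∩ (Q₁ ∪ Q₃ ∪ Q₄ ∪ U)) := ⟨_, _, _, h₁, h₃, h₄, by grind⟩
  have d₃ : G.CoveredByThree (S ∩ (Q₁ ∪ Q₄ ∪ Q₅ ∪ U)) := ⟨_, _, _, h₁, h₄, h₅, by grind⟩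
  have d₄ : G.CoveredByThree (S ∩ (Q₁ ∪ Q₅ ∪ Q₆ ∪ U)) := ⟨_, _, _, h₁, h₅, h₆, by grind⟩
  have e₃ := d₄.decomposable.glue d₃.decomposable (by grind) (by grind)
    (by grind [Separated, adj_comm])
  have e₂ := e₃.glue d₂.decomposable (by grind [Separated]) (by grind)
    (by grind [Separated, adj_comm])
  have e₁ := e₂.glue d₁.decomposable (by grind [Separated]) (by grind)
    (by grind [Separated, adj_comm])
  have h := e₁.of_isClique (C := ∅) (by simp) (Set.empty_subset _)
  convert h using 1
  grind

namespace Pentagon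

variable {S : Set V} {c₁ c₂ c₃ c₄ c₅ : V}

theorem hubs_rotate : G.hubs c₂ c₃ c₄ c₅ c₁ = G.hubs c₁ c₂ c₃ c₄ c₅ := by
  ext v
  simp only [mem_hubs]
  tauto

theorem isClique_twins_union_hubs (hS : G.SquareFree) (hc : G.Pentagon c₁ c₂ c₃ c₄ c₅) :
    G.IsClique (G.twins c₂ c₃ c₄ c₅ ∪ G.hubs c₁ c₂ c₃ c₄ c₅) :=
  (hc.isClique_twins hS).union (hc.isClique_hubs hS)
    fun _ ha _ hb ↦ .inr (hc.adj_hub_twin hS hb ha).symm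

section NonadjacentEars

variable {a b : V}

theorem not_adj_twin_of_nonadj_ear (hS : G.SquareFree) (hP : G.PathDominated)
    (hc : G.Pentagon c₁ c₂ c₃ c₄ c₅) (ha : a ∈ G.ears c₁ c₂ c₃ c₄ c₅)
    (hb : b ∈ G.ears c₁ c₂ c₃ c₄ c₅) (hne : a ≠ b) (hab : ¬ G.Adj a b) {q : V}
    (hq : q ∈ G.twins c₄ c₅ c₁ c₂) : ¬ G.Adj a q := by
  have := hS a q b c₁
  have := hP a q c₄ c₅ b
  cases hc
  grind [mem_ears, mem_twins, adj_comm]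

theorem not_mem_ears_of_nonadj_ears (hS : G.SquareFree) (hP : G.PathDominated)
    (hc : G.Pentagon c₁ c₂ c₃ c₄ c₅) (ha : a ∈ G.ears c₁ c₂ c₃ c₄ c₅)
    (hb : b ∈ G.ears c₁ c₂ c₃ c₄ c₅) (hne : a ≠ b) (hab : ¬ G.Adj a b) (v : V) :
    v ∉ G.ears c₂ c₃ c₄ c₅ c₁ := by
  intro hv
  have := hc.adj_ear_ear hP ha hv
  have := hc.adj_ear_ear hP hb hv
  have := hS a c₁ b v
  cases hc
  grind [mem_ears, adj_comm]

/-- The component of `a` in the set of ears has no neighbor among the twins of `c₃`. -/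
theorem not_adj_twin_of_mem_componentIn (hS : G.SquareFree) (hP : G.PathDominated)
    (hc : G.Pentagon c₁ c₂ c₃ c₄ c₅) (ha : a ∈ G.ears c₁ c₂ c₃ c₄ c₅)
    (hb : b ∈ G.ears c₁ c₂ c₃ c₄ c₅) (hne : a ≠ b) (hab : ¬ G.Adj a b) {q z : V}
    (hq : q ∈ G.twins c₄ c₅ c₁ c₂) (hz : z ∈ G.componentIn (S ∩ G.ears c₁ c₂ c₃ c₄ c₅) a) :
    ¬ G.Adj z q := by
  induction hz with
  | refl => exact hc.not_adj_twin_of_nonadj_ear hS hP ha hb hne hab hq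
  | tail _ h ih =>
    exact fun hvq ↦ ih (hc.adj_ear_of_adj_ear hS hP h.2.2.2 h.2.1.2 h.1.symm hq hvq)

/-- Two nonadjacent ears at the same edge of a pentagon give rise to a clique cutset. -/
theorem decomposable_of_nonadj_ears (hS : G.SquareFree) (hP : G.PathDominated)
    (ih : ∀ S' ⊂ S, G.Decomposable S' ∅) (hc : G.Pentagon c₁ c₂ c₃ c₄ c₅) (h₄ : c₄ ∈ S)
    (haS : a ∈ S) (ha : a ∈ G.ears c₁ c₂ c₃ c₄ c₅) (hb : b ∈ G.ears c₁ c₂ c₃ c₄ c₅)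
    (hne : a ≠ b) (hab : ¬ G.Adj a b) : G.Decomposable S ∅ := by
  have haW : a ∈ S ∩ G.ears c₁ c₂ c₃ c₄ c₅ := ⟨haS, ha⟩
  have hK := componentIn_subset (G := G) haW
  have hN : G.IsClique (G.twins c₂ c₃ c₄ c₅ ∪ (G.twins c₃ c₄ c₅ c₁ ∪ G.hubs c₁ c₂ c₃ c₄ c₅)) := by
    refine (hc.isClique_twins hS).union (hubs_rotate ▸ hc.rotate.isClique_twins_union_hubs hS) ?_
    rintro q hq r (hr | hr)
    · have := hS a q b r
      have := hc.adj_ear_twin hP ha hq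
      have := hc.adj_ear_twin hP hb hq
      have := hc.adj_ear_twin' hP ha hr
      have := hc.adj_ear_twin' hP hb hr
      grind [adj_comm]
    · exact .inr (hc.adj_hub_twin hS hr hq).symm
  refine decomposable_of_clique_cutset ih (K := G.componentIn (S ∩ G.ears c₁ c₂ c₃ c₄ c₅) a)
    (hK.trans Set.inter_subset_left) (N := S ∩ _) Set.inter_subset_left
    (hN.subset Set.inter_subset_right) (mem_componentIn_self _ _) h₄ ?_ ?_ ?_
  · intro h
    have := hK h
    cases hc
    grind [mem_ears]
  · cases hc
    grind [mem_twins, mem_hubs, SimpleGraph.irrefl, adj_comm]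
  · intro u hu v hv huv
    have huE := (hK hu).2
    rcases hc.classification hS hP v with h | h | h | h | h | h | h | h | h | h | h
    · exact .inr ⟨hv, .inr (.inr h)⟩
    · exact .inr ⟨hv, .inl h⟩
    · exact .inr ⟨hv, .inr (.inl h)⟩
    · exact absurd huv (hc.not_adj_twin_of_mem_componentIn hS hP ha hb hne hab h hu)
    · exact absurd huv (hc.not_adj_ear_twin hS huE h)
    · rw [← twins_reflect] at h
      rw [← ears_reflect] at ha hb hu
      exact absurd huv (hc.reflect.not_adj_twin_of_mem_componentIn hS hP ha hb hne hab h hu)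
    · exact .inl (mem_componentIn_of_adj haW hu huv ⟨hv, h⟩)
    · exact absurd h (hc.not_mem_ears_of_nonadj_ears hS hP ha hb hne hab v)
    · exact (hc.not_ear_ear hS hP ha h).elim
    · exact (hc.rotate.rotate.rotate.not_ear_ear hS hP h ha).elim
    · rw [← ears_reflect] at ha hb h
      exact absurd h (hc.reflect.not_mem_ears_of_nonadj_ears hS hP ha hb hne hab v)

end NonadjacentEars

/-- A pentagon whose ears form cliques at two consecutive edges yields a decomposition. -/
theorem decomposable_of_isClique_ears (hS : G.SquareFree) (hP : G.PathDominated)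
    (hc : G.Pentagon c₁ c₂ c₃ c₄ c₅) (hA₁ : G.IsClique (S ∩ G.ears c₁ c₂ c₃ c₄ c₅))
    (hA₂ : G.IsClique (S ∩ G.ears c₂ c₃ c₄ c₅ c₁)) (hA₃ : ∀ v ∈ S, v ∉ G.ears c₃ c₄ c₅ c₁ c₂)
    (hA₄ : ∀ v ∈ S, v ∉ G.ears c₄ c₅ c₁ c₂ c₃) (hA₅ : ∀ v ∈ S, v ∉ G.ears c₅ c₁ c₂ c₃ c₄) :
    G.Decomposable S ∅ := by
  have r := hc.rotate
  have r₂ := r.rotate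
  have r₃ := r₂.rotate
  have r₄ := r₃.rotate
  refine decomposable_of_five_cliques
    (A₁ := S ∩ G.ears c₁ c₂ c₃ c₄ c₅) (A₂ := S ∩ G.ears c₂ c₃ c₄ c₅ c₁)
    (Q₁ := G.twins c₂ c₃ c₄ c₅) (Q₂ := G.twins c₃ c₄ c₅ c₁) (Q₃ := G.twins c₄ c₅ c₁ c₂)
    (Q₄ := G.twins c₅ c₁ c₂ c₃) (Q₅ := G.twins c₁ c₂ c₃ c₄) (U := G.hubs c₁ c₂ c₃ c₄ c₅)
    (X₄ := {q | q ∈ G.twins c₅ c₁ c₂ c₃ ∧ ∃ a ∈ S ∩ G.ears c₂ c₃ c₄ c₅ c₁, G.Adj a q})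
    (X₅ := {q | q ∈ G.twins c₁ c₂ c₃ c₄ ∧ ∃ a ∈ S ∩ G.ears c₁ c₂ c₃ c₄ c₅, G.Adj a q})
    ?_ (fun _ h ↦ h.1) (fun _ h ↦ h.1) ?_ ?_ ?_ ?_ (r₄.isClique_twins hS) ?_ ?_ ?_ ?_ ?_ ?_ ?_
  · intro v hv
    have := hc.classification hS hP v
    have := hA₃ v hv
    have := hA₄ v hv
    have := hA₅ v hv
    simp only [Set.mem_inter_iff]
    tauto
  · refine (hA₁.union (hc.isClique_twins hS) fun a ha q hq ↦ .inr (hc.adj_ear_twin hP ha.2 hq)).union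
      ((r₄.isClique_twins hS).subset fun _ h ↦ h.1) ?_
    rintro b (hb | hb) q ⟨hq, a, ha, haq⟩
    · by_cases hab : a = b
      · exact .inr (hab ▸ haq)
      · exact .inr (hc.adj_ear_of_adj_ear' hS hP ha.2 hb.2 (hA₁ ha hb hab) hq haq)
    · exact .inr (hc.adj_twin_of_adj_ear' hS hP ha.2 hq haq hb)
  · refine (hA₂.union (r₂.isClique_twins hS) fun a ha q hq ↦ .inr (r.adj_ear_twin' hP ha.2 hq)).union
      ((r₃.isClique_twins hS).subset fun _ h ↦ h.1) ?_
    rintro b (hb | hb) q ⟨hq, a, ha, haq⟩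
    · by_cases hab : a = b
      · exact .inr (hab ▸ haq)
      · exact .inr (r.adj_ear_of_adj_ear hS hP ha.2 hb.2 (hA₂ ha hb hab) hq haq)
    · exact .inr (r.adj_twin_of_adj_ear hS hP ha.2 hq haq hb)
  · have := r.isClique_twins_union_hubs hS
    rwa [hubs_rotate] at this
  · have := r₃.isClique_twins_union_hubs hS
    rwa [hubs_rotate, hubs_rotate, hubs_rotate] at this
  · exact fun a ha q hq ↦ ⟨by grind [mem_ears, mem_twins], hc.not_adj_ear_twin hS ha.2 hq⟩
  · exact fun a ha q hq ↦ ⟨by grind [mem_ears, mem_twins], fun h ↦ hq.2 ⟨hq.1, a, ha, h⟩⟩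
  · exact fun a ha q hq ↦ ⟨by grind [mem_ears, mem_twins], fun h ↦ hq.2 ⟨hq.1, a, ha, h⟩⟩
  · exact fun a ha q hq ↦ ⟨by grind [mem_ears, mem_twins], r.not_adj_ear_twin hS ha.2 hq⟩
  · exact fun a ha q hq ↦ ⟨by grind [mem_twins], r.not_adj_twin_twin hS ha hq⟩
  · exact fun a ha q hq ↦ ⟨by grind [mem_twins], fun h ↦ r₄.not_adj_twin_twin hS hq ha h.symm⟩
  · exact fun a ha q hq ↦ ⟨by grind [mem_twins], r₂.not_adj_twin_twin hS ha hq⟩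

/-- Sets containing a pentagon are decomposable if all smaller sets are. -/
theorem decomposable (hS : G.SquareFree) (hP : G.PathDominated)
    (ih : ∀ S' ⊂ S, G.Decomposable S' ∅) (hc : G.Pentagon c₁ c₂ c₃ c₄ c₅) (h₁ : c₁ ∈ S)
    (h₂ : c₂ ∈ S) (h₃ : c₃ ∈ S) (h₄ : c₄ ∈ S) (h₅ : c₅ ∈ S) : G.Decomposable S ∅ := by
  by_contra hD
  have key : ∀ {c₁ c₂ c₃ c₄ c₅}, G.Pentagon c₁ c₂ c₃ c₄ c₅ → c₄ ∈ S →
      G.IsClique (S ∩ G.ears c₁ c₂ c₃ c₄ c₅) ∧ ((∀ v ∈ S, v ∉ G.ears c₁ c₂ c₃ c₄ c₅) ∨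
        ∀ v ∈ S, v ∉ G.ears c₃ c₄ c₅ c₁ c₂) := by
    intro c₁ c₂ c₃ c₄ c₅ hc h₄
    constructor
    · intro a ha b hb hne
      by_contra hab
      exact hD (hc.decomposable_of_nonadj_ears hS hP ih h₄ ha.1 ha.2 hb.2 hne hab)
    · by_contra! h
      obtain ⟨⟨u, -, hu⟩, v, -, hv⟩ := h
      exact hc.not_ear_ear hS hP hu hv
  have r := hc.rotate
  have r₂ := r.rotate
  have r₃ := r₂.rotate
  have r₄ := r₃.rotate
  obtain ⟨k₁, e₁⟩ := key hc h₄
  obtain ⟨k₂, e₂⟩ := key r h₅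
  obtain ⟨k₃, e₃⟩ := key r₂ h₁
  obtain ⟨k₄, e₄⟩ := key r₃ h₂
  obtain ⟨k₅, e₅⟩ := key r₄ h₃
  have f₁ := fun a b c ↦ hD (hc.decomposable_of_isClique_ears hS hP k₁ k₂ a b c)
  have f₂ := fun a b c ↦ hD (r.decomposable_of_isClique_ears hS hP k₂ k₃ a b c)
  have f₃ := fun a b c ↦ hD (r₂.decomposable_of_isClique_ears hS hP k₃ k₄ a b c)
  have f₄ := fun a b c ↦ hD (r₃.decomposable_of_isClique_ears hS hP k₄ k₅ a b c)
  have f₅ := fun a b c ↦ hD (r₄.decomposable_of_isClique_ears hS hP k₅ k₁ a b c)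
  clear k₁ k₂ k₃ k₄ k₅ key ih hD
  generalize (∀ v ∈ S, v ∉ G.ears c₁ c₂ c₃ c₄ c₅) = E₁ at *
  generalize (∀ v ∈ S, v ∉ G.ears c₂ c₃ c₄ c₅ c₁) = E₂ at *
  generalize (∀ v ∈ S, v ∉ G.ears c₃ c₄ c₅ c₁ c₂) = E₃ at *
  generalize (∀ v ∈ S, v ∉ G.ears c₄ c₅ c₁ c₂ c₃) = E₄ at *
  generalize (∀ v ∈ S, v ∉ G.ears c₅ c₁ c₂ c₃ c₄) = E₅ at *
  clear * - e₁ e₂ e₃ e₄ e₅ f₁ f₂ f₃ f₄ f₅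
  tauto

end Pentagon

/-! ### Induced cycles on six vertices -/

variable (G) in
/-- The vertices `c₁, …, c₆` form an induced cycle in this order. -/
structure Hexagon (c₁ c₂ c₃ c₄ c₅ c₆ : V) : Prop where
  adj₁₂ : G.Adj c₁ c₂
  adj₂₃ : G.Adj c₂ c₃
  adj₃₄ : G.Adj c₃ c₄
  adj₄₅ : G.Adj c₄ c₅
  adj₅₆ : G.Adj c₅ c₆
  adj₆₁ : G.Adj c₆ c₁
  not_adj₁₃ : ¬ G.Adj c₁ c₃
  not_adj₂₄ : ¬ G.Adj c₂ c₄
  not_adj₃₅ : ¬ G.Adj c₃ c₅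
  not_adj₄₆ : ¬ G.Adj c₄ c₆
  not_adj₅₁ : ¬ G.Adj c₅ c₁
  not_adj₆₂ : ¬ G.Adj c₆ c₂
  not_adj₁₄ : ¬ G.Adj c₁ c₄
  not_adj₂₅ : ¬ G.Adj c₂ c₅
  not_adj₃₆ : ¬ G.Adj c₃ c₆

variable (G) in
/-- The vertices of `S` adjacent to both ends of a path `a, b, c, d, e` but to no interior vertex.
If the path is part of an induced hexagon, these are the twins of the sixth vertex. -/
def hexTwins (S : Set V) (a b c d e : V) : Set V :=
  {v | v ∈ S ∧ G.Adj v a ∧ ¬ G.Adj v b ∧ ¬ G.Adj v c ∧ ¬ G.Adj v d ∧ G.Adj v e}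

variable (G) in
/-- The vertices adjacent to all of `c₁, …, c₆`. -/
def hexHubs (c₁ c₂ c₃ c₄ c₅ c₆ : V) : Set V :=
  {v | G.Adj v c₁ ∧ G.Adj v c₂ ∧ G.Adj v c₃ ∧ G.Adj v c₄ ∧ G.Adj v c₅ ∧ G.Adj v c₆}

theorem mem_hexTwins {S : Set V} {a b c d e v : V} : v ∈ G.hexTwins S a b c d e ↔
    v ∈ S ∧ G.Adj v a ∧ ¬ G.Adj v b ∧ ¬ G.Adj v c ∧ ¬ G.Adj v d ∧ G.Adj v e := Iff.rfl

theorem mem_hexHubs {c₁ c₂ c₃ c₄ c₅ c₆ v : V} : v ∈ G.hexHubs c₁ c₂ c₃ c₄ c₅ c₆ ↔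
    G.Adj v c₁ ∧ G.Adj v c₂ ∧ G.Adj v c₃ ∧ G.Adj v c₄ ∧ G.Adj v c₅ ∧ G.Adj v c₆ := Iff.rfl

variable (G) in
/-- The set `S` contains no induced pentagon. -/
def NoPentagonIn (S : Set V) : Prop :=
  ∀ a ∈ S, ∀ b ∈ S, ∀ c ∈ S, ∀ d ∈ S, ∀ e ∈ S, ¬ G.Pentagon a b c d e

namespace Hexagon

variable {S : Set V} {c₁ c₂ c₃ c₄ c₅ c₆ : V}

theorem rotate (hc : G.Hexagon c₁ c₂ c₃ c₄ c₅ c₆) : G.Hexagon c₂ c₃ c₄ c₅ c₆ c₁ := by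
  cases hc
  constructor <;> grind [adj_comm]

/-- A vertex of `S` adjacent to two opposite vertices of the hexagon is adjacent to the vertices
between them. -/
theorem adj_of_adj_opposite (hS : G.SquareFree) (h5 : G.NoPentagonIn S)
    (hc : G.Hexagon c₁ c₂ c₃ c₄ c₅ c₆) (h₁ : c₁ ∈ S) (h₂ : c₂ ∈ S) (h₃ : c₃ ∈ S) (h₄ : c₄ ∈ S)
    {v : V} (hv : v ∈ S) (hv₁ : G.Adj v c₁) (hv₄ : G.Adj v c₄) : G.Adj v c₂ ∧ G.Adj v c₃ := by
  have := hS v c₁ c₂ c₃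
  have := hS v c₂ c₃ c₄
  have h : ¬ (¬ G.Adj v c₂ ∧ ¬ G.Adj c₃ v) := fun h ↦ h5 v hv c₁ h₁ c₂ h₂ c₃ h₃ c₄ h₄
    ⟨hv₁, hc.adj₁₂, hc.adj₂₃, hc.adj₃₄, hv₄.symm, h.1, hc.not_adj₁₃, hc.not_adj₂₄, h.2,
      fun h' ↦ hc.not_adj₁₄ h'.symm⟩
  cases hc
  grind [adj_comm]

/-- Every vertex of `S` is a hub or a twin. -/
theorem classification (hS : G.SquareFree) (hP : G.PathDominated) (h5 : G.NoPentagonIn S)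
    (hc : G.Hexagon c₁ c₂ c₃ c₄ c₅ c₆) (h₁ : c₁ ∈ S) (h₂ : c₂ ∈ S) (h₃ : c₃ ∈ S) (h₄ : c₄ ∈ S)
    (h₅ : c₅ ∈ S) (h₆ : c₆ ∈ S) {v : V} (hv : v ∈ S) :
    v ∈ G.hexTwins S c₂ c₃ c₄ c₅ c₆ ∨ v ∈ G.hexTwins S c₃ c₄ c₅ c₆ c₁ ∨
    v ∈ G.hexTwins S c₄ c₅ c₆ c₁ c₂ ∨ v ∈ G.hexTwins S c₅ c₆ c₁ c₂ c₃ ∨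
    v ∈ G.hexTwins S c₆ c₁ c₂ c₃ c₄ ∨ v ∈ G.hexTwins S c₁ c₂ c₃ c₄ c₅ ∨
    v ∈ G.hexHubs c₁ c₂ c₃ c₄ c₅ c₆ := by
  have key : ∀ {c₁ c₂ c₃ c₄ c₅ c₆}, G.Hexagon c₁ c₂ c₃ c₄ c₅ c₆ → c₁ ∈ S → c₂ ∈ S → c₃ ∈ S →
      c₄ ∈ S → (G.Adj v c₁ → G.Adj v c₃ → G.Adj v c₅ → G.Adj v c₂) ∧
      (G.Adj v c₁ ∨ G.Adj v c₂ ∨ G.Adj v c₃ ∨ G.Adj v c₄) ∧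
      (G.Adj v c₁ → G.Adj v c₄ → G.Adj v c₂ ∧ G.Adj v c₃) := by
    intro c₁ c₂ c₃ c₄ c₅ c₆ hc h₁ h₂ h₃ h₄
    refine ⟨fun h1 h3 h5 ↦ ?_, ?_, hc.adj_of_adj_opposite hS h5 h₁ h₂ h₃ h₄ hv⟩
    · have := hS v c₁ c₂ c₃
      cases hc
      grind [adj_comm]
    · have := hP c₁ c₂ c₃ c₄ v
      cases hc
      grind
  have r := hc.rotate
  have r₂ := r.rotate
  have r₃ := r₂.rotate
  have r₄ := r₃.rotate
  have r₅ := r₄.rotate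
  have k1 := key hc h₁ h₂ h₃ h₄
  have k2 := key r h₂ h₃ h₄ h₅
  have k3 := key r₂ h₃ h₄ h₅ h₆
  have k4 := key r₃ h₄ h₅ h₆ h₁
  have k5 := key r₄ h₅ h₆ h₁ h₂
  have k6 := key r₅ h₆ h₁ h₂ h₃
  clear key r r₂ r₃ r₄ r₅
  simp only [mem_hexTwins, mem_hexHubs, hv, true_and]
  clear * - k1 k2 k3 k4 k5 k6
  generalize G.Adj v c₁ = a₁ at *
  generalize G.Adj v c₂ = a₂ at *
  generalize G.Adj v c₃ = a₃ at *
  generalize G.Adj v c₄ = a₄ at *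
  generalize G.Adj v c₅ = a₅ at *
  generalize G.Adj v c₆ = a₆ at *
  by_cases h₁ : a₁ <;> by_cases h₂ : a₂ <;> by_cases h₃ : a₃ <;> by_cases h₄ : a₄ <;>
    simp_all

theorem isClique_hexTwins (hS : G.SquareFree) (hc : G.Hexagon c₁ c₂ c₃ c₄ c₅ c₆) :
    G.IsClique (G.hexTwins S c₂ c₃ c₄ c₅ c₆) := by
  intro u hu v hv huv
  have := hS u c₂ v c₆
  cases hc
  grind [mem_hexTwins, adj_comm]

theorem isClique_hexTwins_union_hexHubs (hS : G.SquareFree)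
    (hc : G.Hexagon c₁ c₂ c₃ c₄ c₅ c₆) :
    G.IsClique (G.hexTwins S c₂ c₃ c₄ c₅ c₆ ∪ G.hexHubs c₁ c₂ c₃ c₄ c₅ c₆) := by
  refine (hc.isClique_hexTwins hS).union ?_ ?_
  all_goals
    intro u hu v hv
    have := hS u c₂ v c₆
    cases hc
    grind [mem_hexTwins, mem_hexHubs, adj_comm]

theorem separated_of_distance_two (h5 : G.NoPentagonIn S) (hc : G.Hexagon c₁ c₂ c₃ c₄ c₅ c₆)
    (h₄ : c₄ ∈ S) (h₅ : c₅ ∈ S) (h₆ : c₆ ∈ S) :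
    G.Separated (G.hexTwins S c₂ c₃ c₄ c₅ c₆) (G.hexTwins S c₄ c₅ c₆ c₁ c₂) := by
  intro u hu v hv
  rw [mem_hexTwins] at hu hv
  refine ⟨by grind, fun huv ↦ h5 u hu.1 v hv.1 c₄ h₄ c₅ h₅ c₆ h₆ ?_⟩
  cases hc
  constructor <;> grind [adj_comm]

theorem separated_of_distance_three (hS : G.SquareFree) (hc : G.Hexagon c₁ c₂ c₃ c₄ c₅ c₆) :
    G.Separated (G.hexTwins S c₂ c₃ c₄ c₅ c₆) (G.hexTwins S c₅ c₆ c₁ c₂ c₃) := by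
  intro u hu v hv
  have := hS u v c₃ c₂
  cases hc
  grind [mem_hexTwins, adj_comm]

theorem decomposable (hS : G.SquareFree) (hP : G.PathDominated) (h5 : G.NoPentagonIn S)
    (hc : G.Hexagon c₁ c₂ c₃ c₄ c₅ c₆) (h₁ : c₁ ∈ S) (h₂ : c₂ ∈ S) (h₃ : c₃ ∈ S) (h₄ : c₄ ∈ S)
    (h₅ : c₅ ∈ S) (h₆ : c₆ ∈ S) : G.Decomposable S ∅ := by
  have r := hc.rotate
  have r₂ := r.rotate
  have r₃ := r₂.rotate
  have r₄ := r₃.rotate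
  have r₅ := r₄.rotate
  refine decomposable_of_six_cliques
    (fun v hv ↦ hc.classification hS hP h5 h₁ h₂ h₃ h₄ h₅ h₆ hv)
    (hc.isClique_hexTwins_union_hexHubs hS) (r.isClique_hexTwins hS) (r₂.isClique_hexTwins hS)
    (r₃.isClique_hexTwins hS) (r₄.isClique_hexTwins hS) (r₅.isClique_hexTwins hS)
    (r.separated_of_distance_two h5 h₅ h₆ h₁) (r.separated_of_distance_three hS) ?_
    (r₂.separated_of_distance_two h5 h₆ h₁ h₂) (r₂.separated_of_distance_three hS)
    (r₃.separated_of_distance_two h5 h₁ h₂ h₃)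
  exact fun u hu v hv ↦ (r₅.separated_of_distance_two h5 h₃ h₄ h₅ v hv u hu).imp Ne.symm
    (mt Adj.symm)

end Hexagon

/-! ### The main decomposition -/

/-- Two nonadjacent neighbors of `y` attached to a component of the non-neighborhood of `y` lie on
an induced cycle through `y` of length at most six. -/
theorem exists_pentagon_or_hexagon (hS : G.SquareFree) (hP : G.PathDominated) {W : Set V}
    {x y m n p q : V} (hx : x ∈ W) (hW : ∀ w ∈ W, w ≠ y ∧ ¬ G.Adj y w) (hm : G.Adj y m)
    (hn : G.Adj y n) (hne : m ≠ n) (hmn : ¬ G.Adj m n) (hp : p ∈ G.componentIn W x)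
    (hq : q ∈ G.componentIn W x) (hmp : G.Adj m p) (hnq : G.Adj n q) :
    (∃ a ∈ W, ∃ b ∈ W, G.Pentagon y m a b n) ∨
      ∃ a ∈ W, ∃ b ∈ W, ∃ c ∈ W, G.Hexagon y m a b c n := by
  have hsub := componentIn_subset (G := G) hx
  have hcom : ∀ a ∈ W, G.Adj m a → ¬ G.Adj n a := by
    intro a ha hma hna
    have := hS y m a n
    have := hW a ha
    grind [adj_comm]
  have hpent : ∀ a ∈ W, ∀ b ∈ W, G.Adj m a → G.Adj n b → G.Adj a b → G.Pentagon y m a b n := by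
    intro a ha b hb hma hnb hab
    have := hW a ha
    have := hW b hb
    have := hcom a ha
    have := hcom b hb
    constructor <;> grind [adj_comm]
  rcases componentIn_dist_le_two hP hx (fun w hw ↦ (hW w hw).2) hp hq with
    rfl | hpq | ⟨w, hw, hpw, hwq⟩
  · exact absurd hnq (hcom p (hsub hp) hmp)
  · exact .inl ⟨p, hsub hp, q, hsub hq, hpent p (hsub hp) q (hsub hq) hmp hnq hpq⟩
  · by_cases hpq : G.Adj p q
    · exact .inl ⟨p, hsub hp, q, hsub hq, hpent p (hsub hp) q (hsub hq) hmp hnq hpq⟩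
    by_cases hmw : G.Adj m w
    · exact .inl ⟨w, hsub hw, q, hsub hq, hpent w (hsub hw) q (hsub hq) hmw hnq hwq⟩
    by_cases hnw : G.Adj n w
    · exact .inl ⟨p, hsub hp, w, hsub hw, hpent p (hsub hp) w (hsub hw) hmp hnw hpw⟩
    refine .inr ⟨p, hsub hp, w, hsub hw, q, hsub hq, ?_⟩
    have := hW p (hsub hp)
    have := hW q (hsub hq)
    have := hW w (hsub hw)
    have := hcom p (hsub hp)
    have := hcom q (hsub hq)
    constructor <;> grind [adj_comm]

theorem decomposable_of_squareFree_of_pathDominated [Finite V] (hS : G.SquareFree)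
    (hP : G.PathDominated) (S : Set V) : G.Decomposable S ∅ := by
  induction S using WellFoundedLT.induction with
  | ind S ih =>
  by_cases h5 : G.NoPentagonIn S
  swap
  · simp only [NoPentagonIn, not_forall, not_not] at h5
    obtain ⟨a, ha, b, hb, c, hc, d, hd, e, he, h⟩ := h5
    exact h.decomposable hS hP ih ha hb hc hd he
  by_cases hcl : G.IsClique S
  · exact (CoveredByThree.decomposable ⟨S, S, S, hcl, hcl, hcl, by simp⟩).of_isClique (by simp)
      (Set.empty_subset _)
  obtain ⟨x, hxS, y, hyS, hxy, hadj⟩ : ∃ x ∈ S, ∃ y ∈ S, x ≠ y ∧ ¬ G.Adj x y := by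
    simpa [IsClique, Set.Pairwise] using hcl
  let W : Set V := {w | w ∈ S ∧ w ≠ y ∧ ¬ G.Adj y w}
  have hxW : x ∈ W := ⟨hxS, hxy, fun h ↦ hadj h.symm⟩
  have hsub := componentIn_subset (G := G) hxW
  let N : Set V := {m | m ∈ S ∧ G.Adj y m ∧ ∃ p ∈ G.componentIn W x, G.Adj m p}
  by_cases hN : G.IsClique N
  · refine decomposable_of_clique_cutset ih (K := G.componentIn W x) (N := N)
      (hsub.trans fun _ h ↦ h.1) (fun _ h ↦ h.1) hN (mem_componentIn_self _ _) hyS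
      (fun h ↦ (hsub h).2.1 rfl) (fun h ↦ h.2.1.ne rfl) fun u hu v hv huv ↦ ?_
    by_cases hyv : G.Adj y v
    · exact .inr ⟨hv, hyv, u, hu, huv.symm⟩
    · refine .inl (mem_componentIn_of_adj hxW hu huv ⟨hv, ?_, hyv⟩)
      rintro rfl
      exact (hsub hu).2.2 huv.symm
  · obtain ⟨m, ⟨hmS, hm, p, hp, hmp⟩, n, ⟨hnS, hn, q, hq, hnq⟩, hne, hmn⟩ :
        ∃ m ∈ N, ∃ n ∈ N, m ≠ n ∧ ¬ G.Adj m n := by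
      simpa only [IsClique, Set.Pairwise, not_forall, exists_prop] using hN
    rcases exists_pentagon_or_hexagon hS hP hxW (fun w hw ↦ hw.2) hm hn hne hmn hp hq hmp hnq with
      ⟨a, ha, b, hb, h⟩ | ⟨a, ha, b, hb, c, hc, h⟩
    · exact absurd h (h5 y hyS m hmS a ha.1 b hb.1 n hnS)
    · exact h.decomposable hS hP h5 hyS hmS ha.1 hb.1 hc.1 hnS

end SimpleGraph

/-- If `G` is a `{P_4 + P_1, C_4}`-free graph, then `tree-θ(G) ≤ 3`;
consequently `tree-α(G) ≤ 3` as well. -/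
theorem stmt_18 {V : Type} [Finite V] (G : SimpleGraph V)
    (h1 : IndFree P4plusP1 G) (h2 : IndFree (cycleGraph 4) G) :
    treeCliqueCoverNum G ≤ 3 ∧ treeIndepNum G ≤ 3 :=
  (decomposable_of_squareFree_of_pathDominated (squareFree_of_indFree h2)
    (pathDominated_of_indFree h1) Set.univ).treeNum_le_three
end

section
/- For every integer t ≥ 2, let G_t be the graph obtained from the complete graph with vertex set {v_0, v_1, …, v_t} by subdividing once every edge incident with v_0. Then G_t is P_6-free and C_4-free, and G_t contains K_{2,t} as an induced minor. -/
open SimpleGraph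

/-- The graph `G_t`, obtained from the complete graph on `{v_0, v_1, …, v_t}` by
subdividing once every edge incident with `v_0`. The vertex `inl i` is `v_i`, and the
vertex `inr i` is the subdivision vertex of the edge `v_0 v_{i+1}`. -/
def subdividedClique (t : ℕ) : SimpleGraph (Fin (t + 1) ⊕ Fin t) :=
  SimpleGraph.fromRel (fun x y =>
    match x, y with
    | .inl i, .inl j => i ≠ 0 ∧ j ≠ 0
    | .inl j, .inr i => j = 0 ∨ j = i.succ
    | _, _ => False)

namespace subdividedClique

variable {t : ℕ}

/-- A vertex of `G_t` is `v_0`, a clique vertex `v_{i+1}`, or a subdivision vertex. -/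
theorem vertex_cases (x : Fin (t + 1) ⊕ Fin t) :
    x = .inl 0 ∨ (∃ i : Fin t, x = .inl i.succ) ∨ ∃ i : Fin t, x = .inr i := by
  rcases x with i | i
  · induction i using Fin.cases <;> simp
  · simp

@[simp]
theorem not_adj_zero_succ (i : Fin t) : ¬(subdividedClique t).Adj (.inl 0) (.inl i.succ) := by
  simp [subdividedClique]

@[simp]
theorem not_adj_succ_zero (i : Fin t) : ¬(subdividedClique t).Adj (.inl i.succ) (.inl 0) := by
  simp [subdividedClique]

@[simp]
theorem adj_succ_succ (i j : Fin t) :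
    (subdividedClique t).Adj (.inl i.succ) (.inl j.succ) ↔ i ≠ j := by
  simp [subdividedClique]

@[simp]
theorem adj_zero_inr (i : Fin t) : (subdividedClique t).Adj (.inl 0) (.inr i) := by
  simp [subdividedClique]

@[simp]
theorem adj_inr_zero (i : Fin t) : (subdividedClique t).Adj (.inr i) (.inl 0) := by
  simp [subdividedClique]

@[simp]
theorem adj_succ_inr (i j : Fin t) :
    (subdividedClique t).Adj (.inl i.succ) (.inr j) ↔ i = j := by
  simp [subdividedClique]

@[simp]
theorem adj_inr_succ (i j : Fin t) :
    (subdividedClique t).Adj (.inr i) (.inl j.succ) ↔ i = j := by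
  simp [subdividedClique, eq_comm]

@[simp]
theorem not_adj_inr_inr (i j : Fin t) : ¬(subdividedClique t).Adj (.inr i) (.inr j) := by
  simp [subdividedClique]

theorem indFree_cycleGraph_four : IndFree (cycleGraph 4) (subdividedClique t) := by
  refine ⟨fun f => ?_⟩
  have adj (i j : Fin 4) : (subdividedClique t).Adj (f i) (f j) ↔ (cycleGraph 4).Adj i j :=
    f.map_adj_iff
  have h01 := (adj 0 1).2 (by decide)
  have h12 := (adj 1 2).2 (by decide)
  have h23 := (adj 2 3).2 (by decide)
  have h30 := (adj 3 0).2 (by decide)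
  have h02 := (adj 0 2).not.2 (by decide)
  have h13 := (adj 1 3).not.2 (by decide)
  have n02 : f 0 ≠ f 2 := f.injective.ne (by decide)
  have n13 : f 1 ≠ f 3 := f.injective.ne (by decide)
  clear adj
  generalize f 0 = a, f 1 = b, f 2 = c, f 3 = d at *
  rcases vertex_cases a with rfl | ⟨a, rfl⟩ | ⟨a, rfl⟩ <;>
  rcases vertex_cases b with rfl | ⟨b, rfl⟩ | ⟨b, rfl⟩ <;> simp at h01 <;>
  rcases vertex_cases c with rfl | ⟨c, rfl⟩ | ⟨c, rfl⟩ <;> simp at h12 h02 n02 <;>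
  rcases vertex_cases d with rfl | ⟨d, rfl⟩ | ⟨d, rfl⟩ <;> simp at h23 h30 h13 n13 <;>
  grind

theorem indFree_pathGraph_six : IndFree (pathGraph 6) (subdividedClique t) := by
  refine ⟨fun f => ?_⟩
  have adj (i j : Fin 6) :
      (subdividedClique t).Adj (f i) (f j) ↔ (i : ℕ) + 1 = j ∨ (j : ℕ) + 1 = i := by
    rw [f.map_adj_iff, pathGraph_adj]
  have h01 := (adj 0 1).2 (by decide)
  have h12 := (adj 1 2).2 (by decide)
  have h23 := (adj 2 3).2 (by decide)
  have h34 := (adj 3 4).2 (by decide)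
  have h45 := (adj 4 5).2 (by decide)
  have h02 := (adj 0 2).not.2 (by decide)
  have h03 := (adj 0 3).not.2 (by decide)
  have h04 := (adj 0 4).not.2 (by decide)
  have h05 := (adj 0 5).not.2 (by decide)
  have h13 := (adj 1 3).not.2 (by decide)
  have h14 := (adj 1 4).not.2 (by decide)
  have h15 := (adj 1 5).not.2 (by decide)
  have h24 := (adj 2 4).not.2 (by decide)
  have h25 := (adj 2 5).not.2 (by decide)
  have h35 := (adj 3 5).not.2 (by decide)
  have ne {i j : Fin 6} (h : i ≠ j) : f i ≠ f j := f.injective.ne h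
  have n02 := ne (show 0 ≠ 2 by decide)
  have n03 := ne (show 0 ≠ 3 by decide)
  have n04 := ne (show 0 ≠ 4 by decide)
  have n13 := ne (show 1 ≠ 3 by decide)
  have n14 := ne (show 1 ≠ 4 by decide)
  have n15 := ne (show 1 ≠ 5 by decide)
  have n24 := ne (show 2 ≠ 4 by decide)
  have n25 := ne (show 2 ≠ 5 by decide)
  have n35 := ne (show 3 ≠ 5 by decide)
  clear adj ne
  generalize f 0 = a, f 1 = b, f 2 = c, f 3 = d, f 4 = e, f 5 = g at *
  rcases vertex_cases a with rfl | ⟨a, rfl⟩ | ⟨a, rfl⟩ <;>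
  rcases vertex_cases b with rfl | ⟨b, rfl⟩ | ⟨b, rfl⟩ <;> simp at h01 <;>
  rcases vertex_cases c with rfl | ⟨c, rfl⟩ | ⟨c, rfl⟩ <;> simp at h12 h02 n02 <;>
  rcases vertex_cases d with rfl | ⟨d, rfl⟩ | ⟨d, rfl⟩ <;> simp at h23 h13 h03 n03 n13 <;>
  rcases vertex_cases e with rfl | ⟨e, rfl⟩ | ⟨e, rfl⟩ <;>
    simp at h34 h24 h14 h04 n04 n14 n24 <;>
  rcases vertex_cases g with rfl | ⟨g, rfl⟩ | ⟨g, rfl⟩ <;>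
    simp at h45 h35 h25 h15 h05 n15 n25 n35 <;>
  grind

theorem induce_range_succ_eq_top :
    (subdividedClique t).induce (Set.range fun i : Fin t => .inl i.succ) = ⊤ := by
  ext ⟨_, i, rfl⟩ ⟨_, j, rfl⟩
  simp [Subtype.ext_iff]

/-- Contracting the clique `{v_1, …, v_t}` of `G_t` gives `K_{2,t}`. -/
theorem inducedMinor_completeBipartiteGraph (ht : 0 < t) :
    InducedMinor (completeBipartiteGraph (Fin 2) (Fin t)) (subdividedClique t) := by
  have : Nonempty (Fin t) := ⟨⟨0, ht⟩⟩
  let B : Fin 2 ⊕ Fin t → Set (Fin (t + 1) ⊕ Fin t) :=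
    Sum.elim ![{.inl 0}, Set.range fun i : Fin t => .inl i.succ] fun i => {.inr i}
  refine ⟨B, ?_, ?_, ?_, ?_⟩
  · rintro (i | i)
    · fin_cases i
      · exact Set.singleton_nonempty _
      · exact Set.range_nonempty _
    · exact Set.singleton_nonempty _
  · rintro (i | i)
    · fin_cases i
      · change ((subdividedClique t).induce {.inl 0}).Connected
        exact Connected.of_subsingleton
      · change ((subdividedClique t).induce (Set.range fun i : Fin t => .inl i.succ)).Connected
        rw [induce_range_succ_eq_top]
        exact connected_top
    · change ((subdividedClique t).induce {.inr i}).Connected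
      exact Connected.of_subsingleton
  · rintro (i | i) (j | j) hij
    · fin_cases i <;> fin_cases j <;> simp_all [B]
    · fin_cases i <;> simp [B]
    · fin_cases j <;> simp [B]
    · simpa [B, eq_comm] using hij
  · rintro (i | i) (j | j) hij
    · fin_cases i <;> fin_cases j <;> simp_all [B]
    · fin_cases i <;> simp [B]
    · fin_cases j <;> simp [B]
    · simp [B]

end subdividedClique

/-- For every integer `t ≥ 2`, the graph `G_t` obtained from the complete
graph on `{v_0, …, v_t}` by subdividing once every edge incident with `v_0` is `P_6`-free
and `C_4`-free, and contains `K_{2,t}` as an induced minor. -/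
theorem stmt_19 (t : ℕ) (ht : 2 ≤ t) :
    IndFree (pathGraph 6) (subdividedClique t) ∧
    IndFree (cycleGraph 4) (subdividedClique t) ∧
    InducedMinor (completeBipartiteGraph (Fin 2) (Fin t)) (subdividedClique t) :=
  ⟨subdividedClique.indFree_pathGraph_six, subdividedClique.indFree_cycleGraph_four,
    subdividedClique.inducedMinor_completeBipartiteGraph (by omega)⟩
end
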